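/- arXiv:1504.03037 — 2 statements merged into one kernel-verified Lean document; each statement's English description precedes it below -/
import Mathlib

section
/- Let T be a locally simple complete CLO theory and let Φ ∈ IT(T). Then the set of complete theories {Th(Φ(A)) : A ⊨ T} (where Th(∅) denotes the theory of the empty structure, in case Φ(A) = ∅) is finite and each of its members is ℵ₀-categorical; moreover, this set has exactly one element if and only if Φ is isolated in IT(T). -/
open FirstOrder Language Set

/-- Relation symbols of the language `L_κ` of colored linear orders:
a binary `<` and a unary color predicate for each `i : ι`. -/
inductive CLORel (ι : Type) : ℕ → Type
  | lt : CLORel ι 2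
  | color (i : ι) : CLORel ι 1

/-- The language `L_κ`, where the colors are indexed by `ι`. -/
def CLOLang (ι : Type) : Language :=
  ⟨fun _ => Empty, CLORel ι⟩

/-- Interpretation of the relation symbols on a linear order `M` with colors `c`. -/
def cloRelMap {ι M : Type} [LinearOrder M] (c : ι → Set M) :
    ∀ {n}, CLORel ι n → (Fin n → M) → Prop
  | _, .lt => fun v => v 0 < v 1
  | _, .color i => fun v => v 0 ∈ c i

/-- The canonical `L_κ`-structure (a colored linear order, CLO) on a linear
order `M` whose colors are given by `c : ι → Set M`. -/
def CLOStr (ι M : Type) [LinearOrder M] (c : ι → Set M) : (CLOLang ι).Structure M where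
  funMap := fun f => Empty.elim f
  RelMap := cloRelMap c

/-- Satisfaction of an `L_κ`-formula in the CLO `(M, <, c)`. -/
def Sat {ι : Type} (M : Type) [LinearOrder M] (c : ι → Set M) {α : Type}
    (φ : (CLOLang ι).Formula α) (v : α → M) : Prop :=
  letI := CLOStr ι M c
  φ.Realize v

/-- The induced colors on a subset of a CLO. -/
def subColor {ι M : Type} (c : ι → Set M) (s : Set M) : ι → Set s :=
  fun i => {x | (x : M) ∈ c i}

/-- Elementary equivalence of CLOs. -/
def CLOEquiv (ι : Type) (M : Type) [LinearOrder M] (cM : ι → Set M)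
    (N : Type) [LinearOrder N] (cN : ι → Set N) : Prop :=
  letI := CLOStr ι M cM
  letI := CLOStr ι N cN
  M ≅[CLOLang ι] N

/-- Isomorphism of CLOs (as `L_κ`-structures). -/
def CLOIso (ι : Type) (M : Type) [LinearOrder M] (cM : ι → Set M)
    (N : Type) [LinearOrder N] (cN : ι → Set N) : Prop :=
  letI := CLOStr ι M cM
  letI := CLOStr ι N cN
  Nonempty (M ≃[CLOLang ι] N)

/-- The complete theory of a CLO. -/
def CLOTheory (ι : Type) (M : Type) [LinearOrder M] (c : ι → Set M) : (CLOLang ι).Theory :=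
  letI := CLOStr ι M c
  (CLOLang ι).completeTheory M

/-- The induced colors on a lexicographic sum `Σₗ i, A i` of CLOs. -/
def sigmaColor {ι I : Type} {A : I → Type} (c : ∀ i, ι → Set (A i)) :
    ι → Set (Σₗ i, A i) :=
  fun k => {x | (ofLex x).2 ∈ c (ofLex x).1 k}

/-- The induced colors on a two-term lexicographic sum `α ⊕ₗ β` of CLOs. -/
def sumColor2 {ι α β : Type} (ca : ι → Set α) (cb : ι → Set β) : ι → Set (α ⊕ₗ β) :=
  fun k => {x | Sum.elim (· ∈ ca k) (· ∈ cb k) (ofLex x)}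

/-- The set defined by a parameter-free formula in one variable in a CLO. -/
def FmlSet (ι : Type) (M : Type) [LinearOrder M] (c : ι → Set M)
    (φ : (CLOLang ι).Formula Unit) : Set M :=
  {x | Sat M c φ fun _ => x}

/-- A CLO is self-additive if it has more than one point and its only
convex parameter-free-definable subsets are `∅` and the whole order. -/
def SelfAdditive (ι : Type) (M : Type) [LinearOrder M] (c : ι → Set M) : Prop :=
  Nontrivial M ∧
    ∀ φ : (CLOLang ι).Formula Unit, (FmlSet ι M c φ).OrdConnected →
      FmlSet ι M c φ = ∅ ∨ FmlSet ι M c φ = Set.univ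

/-- `a ∼ b`: some set definable with parameter `a` is convex, bounded above and
below, and contains both `a` and `b`. -/
def SimRel (ι : Type) {M : Type} [LinearOrder M] (c : ι → Set M) (a b : M) : Prop :=
  ∃ φ : (CLOLang ι).Formula (Unit ⊕ Unit),
    (Set.OrdConnected {x | Sat M c φ (Sum.elim (fun _ => x) fun _ => a)}) ∧
    (∃ u : M, ∀ z ∈ {x | Sat M c φ (Sum.elim (fun _ => x) fun _ => a)}, z < u) ∧
    (∃ l : M, ∀ z ∈ {x | Sat M c φ (Sum.elim (fun _ => x) fun _ => a)}, l < z) ∧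
    a ∈ {x | Sat M c φ (Sum.elim (fun _ => x) fun _ => a)} ∧
    b ∈ {x | Sat M c φ (Sum.elim (fun _ => x) fun _ => a)}

/-- `f : M → N` is an elementary map of CLOs. -/
def IsElemMap (ι : Type) {M N : Type} [LinearOrder M] [LinearOrder N]
    (cM : ι → Set M) (cN : ι → Set N) (f : M → N) : Prop :=
  ∀ (k : ℕ) (φ : (CLOLang ι).Formula (Fin k)) (v : Fin k → M),
    Sat M cM φ v ↔ Sat N cN φ (f ∘ v)

/-- A subset of a CLO, with its induced structure, is an elementary substructure. -/
def IsElemSubset (ι : Type) (B : Type) [LinearOrder B] (cB : ι → Set B) (s : Set B) : Prop :=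
  IsElemMap ι (subColor cB s) cB (Subtype.val : s → B)

/-- A complete `L_κ`-theory is ℵ₀-categorical: any two at-most-countable CLO
models of it are isomorphic.  (Finite and empty models are allowed.) -/
def Aleph0CatTheory (ι : Type) (T : (CLOLang ι).Theory) : Prop :=
  ∀ (N₁ N₂ : Type) (i₁ : LinearOrder N₁) (i₂ : LinearOrder N₂)
    (c₁ : ι → Set N₁) (c₂ : ι → Set N₂),
    Countable N₁ → Countable N₂ →
    (letI := i₁; CLOTheory ι N₁ c₁) = T → (letI := i₂; CLOTheory ι N₂ c₂) = T →
    (letI := i₁; letI := i₂; CLOIso ι N₁ c₁ N₂ c₂)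

/-- `φ` is a convex formula for the complete theory of the CLO `(M₀, c₀)`:
its realizations in every model of that theory form a convex set. -/
def ConvexFml (ι : Type) (M₀ : Type) [LinearOrder M₀] (c₀ : ι → Set M₀)
    (φ : (CLOLang ι).Formula Unit) : Prop :=
  ∀ (B : Type) (iB : LinearOrder B) (cB : ι → Set B),
    (letI := iB; CLOEquiv ι B cB M₀ c₀) → (letI := iB; Set.OrdConnected (FmlSet ι B cB φ))

/-- The set of common realizations of a set of one-variable formulas in a CLO. -/
def TypeSet (ι : Type) (M : Type) [LinearOrder M] (c : ι → Set M)
    (Φ : Set ((CLOLang ι).Formula Unit)) : Set M :=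
  {x | ∀ φ ∈ Φ, Sat M c φ fun _ => x}

/-- A set of one-variable formulas is consistent with the complete theory of
`(M₀, c₀)`: it is realized in some model of that theory. -/
def TypeConsistent (ι : Type) (M₀ : Type) [LinearOrder M₀] (c₀ : ι → Set M₀)
    (Φ : Set ((CLOLang ι).Formula Unit)) : Prop :=
  ∃ (B : Type) (iB : LinearOrder B) (cB : ι → Set B),
    (letI := iB; CLOEquiv ι B cB M₀ c₀) ∧ (letI := iB; ∃ b : B, b ∈ TypeSet ι B cB Φ)

/-- `Φ` is a convex type of the complete theory of `(M₀, c₀)`: a maximal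
consistent set of convex formulas over `∅`.  `IT(T)` is the set of all such. -/
def IsConvexType (ι : Type) (M₀ : Type) [LinearOrder M₀] (c₀ : ι → Set M₀)
    (Φ : Set ((CLOLang ι).Formula Unit)) : Prop :=
  (∀ φ ∈ Φ, ConvexFml ι M₀ c₀ φ) ∧ TypeConsistent ι M₀ c₀ Φ ∧
    ∀ ψ, ConvexFml ι M₀ c₀ ψ → TypeConsistent ι M₀ c₀ (insert ψ Φ) → ψ ∈ Φ

/-- A convex type is isolated if it contains a convex formula contained in no
other convex type. -/
def IsolatedCT (ι : Type) (M₀ : Type) [LinearOrder M₀] (c₀ : ι → Set M₀)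
    (Φ : Set ((CLOLang ι).Formula Unit)) : Prop :=
  ∃ φ ∈ Φ, ConvexFml ι M₀ c₀ φ ∧
    ∀ Ψ, IsConvexType ι M₀ c₀ Ψ → φ ∈ Ψ → Ψ = Φ

/-- A CLO is ℵ₀-saturated: every finitely-satisfiable set of formulas in one
variable over finitely many parameters is realized. -/
def Aleph0Saturated (ι : Type) (S : Type) [LinearOrder S] (cS : ι → Set S) : Prop :=
  ∀ (m : ℕ) (a : Fin m → S) (p : Set ((CLOLang ι).Formula (Unit ⊕ Fin m))),
    (∀ q : Finset ((CLOLang ι).Formula (Unit ⊕ Fin m)), ↑q ⊆ p →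
      ∃ x : S, ∀ φ ∈ q, Sat S cS φ (Sum.elim (fun _ => x) a)) →
    ∃ x : S, ∀ φ ∈ p, Sat S cS φ (Sum.elim (fun _ => x) a)

/-- A CLO is strongly ℵ₀-homogeneous: finite tuples with the same complete type
are conjugate under an automorphism. -/
def StronglyAleph0Homogeneous (ι : Type) (S : Type) [LinearOrder S] (cS : ι → Set S) : Prop :=
  ∀ (m : ℕ) (a b : Fin m → S),
    (∀ φ : (CLOLang ι).Formula (Fin m), Sat S cS φ a ↔ Sat S cS φ b) →
    ∃ g : S ≃ S, (∀ x y : S, x < y ↔ g x < g y) ∧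
      (∀ (k : ι) (x : S), x ∈ cS k ↔ g x ∈ cS k) ∧ ∀ i, g (a i) = b i

/-- Sufficiently saturated: ℵ₀-saturated and strongly ℵ₀-homogeneous. -/
def SuffSaturated (ι : Type) (S : Type) [LinearOrder S] (cS : ι → Set S) : Prop :=
  Aleph0Saturated ι S cS ∧ StronglyAleph0Homogeneous ι S cS

/-- The complete theory of `(M₀, c₀)` is locally simple: for every sufficiently
saturated model `S` and every convex type `Φ`, the theory `T_Φ = Th(Φ(S))` is
ℵ₀-categorical. -/
def LocallySimple (ι : Type) (M₀ : Type) [LinearOrder M₀] (c₀ : ι → Set M₀) : Prop :=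
  ∀ (S : Type) [LinearOrder S], ∀ (cS : ι → Set S),
    CLOEquiv ι S cS M₀ c₀ → SuffSaturated ι S cS →
    ∀ Φ, IsConvexType ι M₀ c₀ Φ →
      Aleph0CatTheory ι
        (CLOTheory ι (TypeSet ι S cS Φ) (subColor cS (TypeSet ι S cS Φ)))

/-- A finite set of pairs is a partial isomorphism of CLOs: it preserves `<`,
equality, and each color, in both directions. -/
def IsPartialIso (ι : Type) {M N : Type} [LinearOrder M] [LinearOrder N]
    (cM : ι → Set M) (cN : ι → Set N) (f : Finset (M × N)) : Prop :=
  ∀ p ∈ f, ∀ q ∈ f,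
    (p.1 < q.1 ↔ p.2 < q.2) ∧ (p.1 = q.1 ↔ p.2 = q.2) ∧
    ∀ k, p.1 ∈ cM k ↔ p.2 ∈ cN k

/-- Back-and-forth equivalence of CLOs: a nonempty family of finite partial
isomorphisms with the back-and-forth extension properties. -/
def BackForthEquiv (ι : Type) (M : Type) [LinearOrder M] (cM : ι → Set M)
    (N : Type) [LinearOrder N] (cN : ι → Set N) : Prop :=
  ∃ F : Set (Finset (M × N)), F.Nonempty ∧ (∀ f ∈ F, IsPartialIso ι cM cN f) ∧
    (∀ f ∈ F, ∀ m : M, ∃ g ∈ F, f ⊆ g ∧ ∃ n : N, (m, n) ∈ g) ∧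
    (∀ f ∈ F, ∀ n : N, ∃ g ∈ F, f ⊆ g ∧ ∃ m : M, (m, n) ∈ g)

/-- The set of complete theories `Th(Φ(A))` as `A` ranges over models of the
complete theory of `(M₀, c₀)` (including the theory of the empty structure,
in case `Φ` is omitted). -/
def TheoriesAt (ι : Type) (M₀ : Type) [LinearOrder M₀] (c₀ : ι → Set M₀)
    (Φ : Set ((CLOLang ι).Formula Unit)) : Set ((CLOLang ι).Theory) :=
  {T | ∃ (A : Type) (iA : LinearOrder A) (cA : ι → Set A),
    (letI := iA; CLOEquiv ι A cA M₀ c₀) ∧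
    T = (letI := iA; CLOTheory ι (TypeSet ι A cA Φ) (subColor cA (TypeSet ι A cA Φ)))}

/-! Since `Φ(A)` is convex, its closed intervals `[a, b]` are definable in `A` from `a` and `b`, so
each of them is elementarily equivalent to a closed interval of `Φ(S)`, where `S` is sufficiently
saturated. By the Ryll-Nardzewski theorem `Φ(S)` has only finitely many types of pairs; hence these
intervals have finitely many theories, all of them `ℵ₀`-categorical.

Now let `N` be a countable colored order all of whose closed intervals have theories in such a
finite set. An ultrafilter argument in the style of Ramsey's theorem thins out a cofinal and a
coinitial sequence so that, through any finite tuple, `N` is cut by a `ℤ`-sequence into consecutive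
closed intervals whose theories are constant on either side of the tuple. There are finitely many
codes recording these theories, and the code determines `N` and the tuple up to isomorphism. So `N`
realizes finitely many types of `n`-tuples, i.e. is `ℵ₀`-categorical, and there are finitely many
possibilities for its theory.

If `Φ` is isolated by `φ`, then `Φ(A) = φ(A)`, whose theory does not depend on `A`. If it is not, no
consistent formula `θ` implies `Φ`, as otherwise the convex hull of `θ` would isolate `Φ`; so some
model omits `Φ`, while another one realizes it. -/

namespace CLO

universe u v w x

section Types

variable {L : FirstOrder.Language.{u, v}} {M N : Type*} [L.Structure M] [L.Structure N]
  {W X Y : Type*}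

variable (L) in
/-- The complete type over `∅` of a tuple, indexed by an arbitrary type of variables. -/
def tp (x : X → M) : Set (L.Formula X) := {φ | φ.Realize x}

@[simp] theorem mem_tp {x : X → M} {φ : L.Formula X} : φ ∈ tp L x ↔ φ.Realize x := Iff.rfl

theorem realize_iff_of_tp_eq {x : X → M} {y : X → N} (h : tp L x = tp L y) (φ : L.Formula X) :
    φ.Realize x ↔ φ.Realize y :=
  Set.ext_iff.1 h φ

theorem tp_eq_of_subset {x : X → M} {y : X → N} (h : tp L x ⊆ tp L y) : tp L x = tp L y :=
  h.antisymm fun φ hφ => by_contra fun hx => (h (a := φ.not) hx) hφ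

theorem tp_comp_eq {x : X → M} {y : X → N} (h : tp L x = tp L y) (f : W → X) :
    tp L (x ∘ f) = tp L (y ∘ f) := by
  ext φ
  simpa only [mem_tp, Formula.realize_relabel] using realize_iff_of_tp_eq h (φ.relabel f)

theorem tp_elementaryEmbedding (f : M ↪ₑ[L] N) (x : X → M) : tp L (f ∘ x) = tp L x :=
  Set.ext fun φ => f.map_formula φ x

theorem tp_equiv (e : M ≃[L] N) (x : X → M) : tp L (e ∘ x) = tp L x :=
  tp_elementaryEmbedding e.toElementaryEmbedding x

theorem tp_eq_of_isEmpty [IsEmpty X] (h : M ≅[L] N) (x : X → M) (y : X → N) :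
    tp L x = tp L y := by
  ext φ
  rw [mem_tp, mem_tp, Subsingleton.elim x ((default : Empty → M) ∘ isEmptyElim),
    Subsingleton.elim y ((default : Empty → N) ∘ isEmptyElim), ← Formula.realize_relabel,
    ← Formula.realize_relabel]
  exact h.realize_sentence _

theorem tp_eq_of_forall_finset {x : X → M} {y : X → N}
    (h : ∀ s : Finset X, tp L (fun i : s => x i) = tp L fun i : s => y i) : tp L x = tp L y := by
  classical
  ext φ
  exact (BoundedFormula.realize_restrictFreeVar (f := id) x fun _ => rfl).symm.trans <|
    (realize_iff_of_tp_eq (h φ.freeVarFinset) (φ.restrictFreeVar id)).trans <|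
    BoundedFormula.realize_restrictFreeVar (f := id) y fun _ => rfl

theorem eq_iff_of_tp_eq {x : X → M} {y : X → N} (h : tp L x = tp L y) (i j : X) :
    x i = x j ↔ y i = y j := by
  simpa using realize_iff_of_tp_eq h (Term.equal (Term.var i) (Term.var j))

open Classical in
/-- Existential closure of the left block of variables of a formula. The block may be infinite, only
the variables occurring in the formula are quantified. -/
noncomputable def exsLeft (χ : L.Formula (W ⊕ X)) : L.Formula X :=
  Formula.iExs {z // z ∈ χ.freeVarFinset} (BoundedFormula.restrictFreeVar χ fun z =>
    match z with
    | ⟨Sum.inl w, h⟩ => Sum.inr ⟨Sum.inl w, h⟩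
    | ⟨Sum.inr x, _⟩ => Sum.inl x)

open Classical in
theorem realize_exsLeft [Nonempty M] {χ : L.Formula (W ⊕ X)} {x : X → M} :
    (exsLeft χ).Realize x ↔ ∃ w : W → M, χ.Realize (Sum.elim w x) := by
  rw [exsLeft, Formula.realize_iExs]
  constructor
  · rintro ⟨i, hi⟩
    refine ⟨fun w => if h : Sum.inl w ∈ χ.freeVarFinset then i ⟨_, h⟩
      else Classical.arbitrary M, ?_⟩
    refine (BoundedFormula.realize_restrictFreeVar (Sum.elim _ x) ?_).1 hi
    rintro ⟨w | x, h⟩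
    · simp [h]
    · rfl
  · rintro ⟨w, hw⟩
    refine ⟨fun z => Sum.elim w x z.1, ?_⟩
    refine (BoundedFormula.realize_restrictFreeVar (Sum.elim w x) ?_).2 hw
    rintro ⟨w | x, h⟩ <;> rfl

theorem exists_realize_of_tp_eq [Nonempty M] [Nonempty N] {x : X → M} {y : X → N}
    (h : tp L x = tp L y) {χ : L.Formula (W ⊕ X)} {w : W → M} (hw : χ.Realize (Sum.elim w x)) :
    ∃ w' : W → N, χ.Realize (Sum.elim w' y) :=
  realize_exsLeft.1 ((realize_iff_of_tp_eq h _).1 (realize_exsLeft.2 ⟨w, hw⟩))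

theorem exists_realize_of_elementarilyEquivalent (h : M ≅[L] N) {φ : L.Formula X} [Nonempty M]
    {x : X → M} (hx : φ.Realize x) : ∃ y : X → N, φ.Realize y := by
  have := h.nonempty
  obtain ⟨y, hy⟩ := exists_realize_of_tp_eq (W := X)
    (tp_eq_of_isEmpty h Empty.elim Empty.elim) (χ := φ.relabel Sum.inl) (w := x)
    (by simpa [Formula.realize_relabel, Sum.elim_comp_inl] using hx)
  exact ⟨y, by simpa [Formula.realize_relabel, Sum.elim_comp_inl] using hy⟩

/-- Every finite part of the set `p` of formulas, whose right variables are interpreted by the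
parameters `a`, is realized by some tuple. -/
def FinSat (a : X → M) (p : Set (L.Formula (Y ⊕ X))) : Prop :=
  ∀ q : Finset (L.Formula (Y ⊕ X)), ↑q ⊆ p → ∃ y : Y → M, ↑q ⊆ tp L (Sum.elim y a)

theorem FinSat.of_tp_eq [Nonempty M] [Nonempty N] {a : X → M} {b : X → N} (h : tp L a = tp L b)
    {p : Set (L.Formula (Y ⊕ X))} (hp : FinSat a p) : FinSat b p := by
  intro q hq
  obtain ⟨y, hy⟩ := hp q hq
  obtain ⟨z, hz⟩ := exists_realize_of_tp_eq h (w := y)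
    (Formula.realize_iInf (f := fun φ : q => φ.1).2 fun φ => hy φ.2)
  exact ⟨z, fun φ hφ => Formula.realize_iInf.1 hz ⟨φ, hφ⟩⟩

theorem finSat_tp (y : Y → M) (a : X → M) : FinSat a (tp L (Sum.elim y a)) :=
  fun _ hq => ⟨y, hq⟩

theorem FinSat.image_relabel {X' Y' : Type*} {a : X → M} {a' : X' → M} {p : Set (L.Formula (Y ⊕ X))}
    (hp : FinSat a p) (g : Y ⊕ X → Y' ⊕ X')
    (hg : ∀ y : Y → M, ∃ y' : Y' → M, Sum.elim y' a' ∘ g = Sum.elim y a) :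
    FinSat a' (Formula.relabel g '' p) := by
  classical
  intro q hq
  obtain ⟨q', hq', rfl⟩ := Finset.subset_set_image_iff.1 hq
  obtain ⟨y, hy⟩ := hp q' hq'
  obtain ⟨y', hy'⟩ := hg y
  refine ⟨y', ?_⟩
  simp only [Finset.coe_image, Set.image_subset_iff]
  intro φ hφ
  simpa [Formula.realize_relabel, hy'] using hy hφ

end Types

section ElementaryRel

variable {L : FirstOrder.Language.{u, v}} {M N : Type*} [L.Structure M] [L.Structure N]
variable {R : Set (M × N)}

variable (L) in
/-- A relation between two structures is elementary if corresponding tuples have the same type; in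
particular it is the graph of a partial bijection. -/
def IsElementaryRel (R : Set (M × N)) : Prop :=
  tp L (fun p : R => p.1.1) = tp L fun p : R => p.1.2

theorem isElementaryRel_range_iff {X : Type*} {f : X → M × N} :
    IsElementaryRel L (range f) ↔ tp L (fun x => (f x).1) = tp L fun x => (f x).2 := by
  refine ⟨fun h => tp_comp_eq h (rangeFactorization f), fun h => ?_⟩
  have hf (p : range f) : f p.2.choose = p := p.2.choose_spec
  have := tp_comp_eq h fun p : range f => p.2.choose
  simpa only [IsElementaryRel, Function.comp_def, hf] using this

theorem IsElementaryRel.tp_eq (hR : IsElementaryRel L R) {X : Type*} {x : X → M} {y : X → N}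
    (h : ∀ i, (x i, y i) ∈ R) : tp L x = tp L y :=
  tp_comp_eq hR fun i => ⟨_, h i⟩

theorem IsElementaryRel.swap (hR : IsElementaryRel L R) : IsElementaryRel L (Prod.swap ⁻¹' R) :=
  (hR.tp_eq fun p : Prod.swap ⁻¹' R => p.2).symm

theorem isElementaryRel_iUnion {ι : Type*} [Nonempty ι] {S : ι → Set (M × N)}
    (hS : ∀ i, IsElementaryRel L (S i)) (hdir : Directed (· ⊆ ·) S) :
    IsElementaryRel L (⋃ i, S i) := by
  refine tp_eq_of_forall_finset fun s => ?_
  obtain ⟨i, hi⟩ := hdir.exists_mem_subset_of_finset_subset_biUnion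
    (s := s.map (Function.Embedding.subtype (· ∈ ⋃ i, S i)))
    (by simp only [Finset.coe_map, Set.image_subset_iff]; exact fun p _ => p.2)
  exact (hS i).tp_eq fun p => hi (Finset.mem_coe.2 (Finset.mem_map_of_mem _ p.2))

theorem IsElementaryRel.exists_equiv (hR : IsElementaryRel L R) (hM : Prod.fst '' R = univ)
    (hN : Prod.snd '' R = univ) : ∃ e : M ≃[L] N, ∀ p ∈ R, e p.1 = p.2 := by
  have hM' : ∀ x, ∃ y, (x, y) ∈ R := by simpa [Set.eq_univ_iff_forall] using hM
  have hN' : ∀ y, ∃ x, (x, y) ∈ R := by simpa [Set.eq_univ_iff_forall] using hN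
  choose f hf using hM'
  choose g hg using hN'
  have key {x x' y y'} (h : (x, y) ∈ R) (h' : (x', y') ∈ R) : x = x' ↔ y = y' :=
    eq_iff_of_tp_eq (hR.tp_eq (x := ![x, x']) (y := ![y, y']) (by simp [h, h'])) 0 1
  refine ⟨⟨⟨f, g, fun x => ?_, fun y => ?_⟩, fun {n} F v => ?_, fun {n} r v => ?_⟩, ?_⟩
  · exact (key (hg _) (hf x)).2 rfl
  · exact (key (hf _) (hg y)).1 rfl
  · have hF := realize_iff_of_tp_eq (hR.tp_eq (x := fun i => i.elim (Structure.funMap F v) v)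
      (y := fun i => f (i.elim (Structure.funMap F v) v)) fun i => hf _)
      (Term.equal (Term.var none) (Term.func F fun i => Term.var (some i)))
    simpa [Function.comp_def] using hF
  · have hr := realize_iff_of_tp_eq (hR.tp_eq (x := v) (y := f ∘ v) fun i => hf _)
      (r.formula fun i => Term.var i)
    simpa [Function.comp_def] using hr.symm
  · rintro ⟨x, y⟩ h
    exact (key (hf x) h).1 rfl

theorem exists_equiv_of_backAndForth {I J : Type*} [Countable I] [Countable J]
    {U : I → Set M} {V : J → Set N} (hU : ⋃ i, U i = univ) (hV : ⋃ j, V j = univ)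
    {𝓡 : Set (Set (M × N))} (h𝓡 : ∀ R ∈ 𝓡, IsElementaryRel L R)
    (hforth : ∀ R ∈ 𝓡, ∀ i, ∃ S ∈ 𝓡, R ⊆ S ∧ U i ⊆ Prod.fst '' S)
    (hback : ∀ R ∈ 𝓡, ∀ j, ∃ S ∈ 𝓡, R ⊆ S ∧ V j ⊆ Prod.snd '' S) (hR : R ∈ 𝓡) :
    ∃ e : M ≃[L] N, ∀ p ∈ R, e p.1 = p.2 := by
  have := Encodable.ofCountable (I ⊕ J)
  let 𝒟 : I ⊕ J → Order.Cofinal 𝓡 := Sum.elim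
    (fun i => ⟨{S | U i ⊆ Prod.fst '' S.1}, fun S =>
      let ⟨S', hS', h, hi⟩ := hforth S S.2 i; ⟨⟨S', hS'⟩, hi, h⟩⟩)
    (fun j => ⟨{S | V j ⊆ Prod.snd '' S.1}, fun S =>
      let ⟨S', hS', h, hj⟩ := hback S S.2 j; ⟨⟨S', hS'⟩, hj, h⟩⟩)
  let S : ℕ → 𝓡 := Order.sequenceOfCofinals ⟨R, hR⟩ 𝒟
  have hS : Monotone S := Order.sequenceOfCofinals.monotone _ _
  have hmem (k : I ⊕ J) : S (Encodable.encode k + 1) ∈ 𝒟 k :=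
    Order.sequenceOfCofinals.encode_mem _ _ k
  have hsub (n : ℕ) : (S n).1 ⊆ ⋃ n, (S n).1 := subset_iUnion (fun n => (S n).1) n
  obtain ⟨e, he⟩ := (isElementaryRel_iUnion (fun n => h𝓡 _ (S n).2)
    (Monotone.directed_le fun _ _ h => hS h)).exists_equiv
    (univ_subset_iff.1 <| hU ▸ iUnion_subset fun i =>
      Subset.trans (hmem (.inl i)) (image_mono (hsub _)))
    (univ_subset_iff.1 <| hV ▸ iUnion_subset fun j =>
      Subset.trans (hmem (.inr j)) (image_mono (hsub _)))
  exact ⟨e, fun p hp => he p (hsub 0 hp)⟩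

end ElementaryRel

section Ultrapower

variable {L : FirstOrder.Language.{u, v}} {M N : Type*} [L.Structure M] [L.Structure N]
variable {V X Y : Type*}

/-- The elementary extension realizes all types over the smaller model in variables from `V`. -/
def RealizesTypes (V : Type*) (f : M ↪ₑ[L] N) : Prop :=
  ∀ p : Set (L.Formula (V ⊕ M)), FinSat (id : M → M) p → ∃ y : V → N, p ⊆ tp L (Sum.elim y f)

theorem exists_realizesTypes (L : FirstOrder.Language.{u, v}) (M : Type w) [L.Structure M]
    [Nonempty M] (V : Type x) :
    ∃ (N : Type (max u v w x)) (_ : L.Structure N) (f : M ↪ₑ[L] N), RealizesTypes V f := by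
  classical
  let I := Finset (L.Formula (V ⊕ M))
  let U : Ultrafilter I := Ultrafilter.of Filter.atTop
  have hU (φ) : ∀ᶠ i : I in U, φ ∈ i :=
    Ultrafilter.of_le _ <|
      (Filter.eventually_ge_atTop {φ}).mono fun _ => Finset.singleton_subset_iff.1
  let N := (U : Filter I).Product fun _ => M
  let f : M → N := fun m => ((fun _ => m : I → M) : N)
  have hf (n : ℕ) (φ : L.Formula (Fin n)) (x : Fin n → M) : φ.Realize (f ∘ x) ↔ φ.Realize x :=
    (Ultraproduct.realize_formula_cast φ fun i _ => x i).trans Filter.eventually_const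
  refine ⟨N, inferInstance, ⟨f, hf⟩, fun p hp => ?_⟩
  have hsat (i : I) : ∃ y : V → M, ∀ φ ∈ i, φ ∈ p → φ.Realize (Sum.elim y id) := by
    obtain ⟨y, hy⟩ := hp (i.filter (· ∈ p)) fun φ hφ => (Finset.mem_filter.1 hφ).2
    exact ⟨y, fun φ hi hφ => hy (Finset.mem_filter.2 ⟨hi, hφ⟩)⟩
  choose y hy using hsat
  refine ⟨fun v => ((fun i => y i v : I → M) : N), fun φ hφ => ?_⟩
  have hreal := (Ultraproduct.realize_formula_cast (u := U) φ fun z i => Sum.elim (y i) id z).2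
    ((hU φ).mono fun i hi => hy i φ hi hφ)
  refine (congrArg φ.Realize (funext fun z => ?_)).mpr hreal
  rcases z with z | z <;> rfl

theorem RealizesTypes.exists_realize [Nonempty M] {f : M ↪ₑ[L] N} (hf : RealizesTypes V f)
    (j : Y ↪ V) {a : X → M} {p : Set (L.Formula (Y ⊕ X))} (hp : FinSat a p) :
    ∃ y : Y → N, p ⊆ tp L (Sum.elim y (f ∘ a)) := by
  obtain ⟨y, hy⟩ := hf _ <| hp.image_relabel (Sum.map j a) fun y =>
    ⟨Function.extend j y fun _ => Classical.arbitrary M, by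
      rw [Sum.elim_comp_map, Function.extend_comp j.injective, Function.id_comp]⟩
  refine ⟨y ∘ j, fun φ hφ => ?_⟩
  simpa [Formula.realize_relabel, Sum.elim_comp_map] using hy ⟨φ, hφ, rfl⟩

theorem RealizesTypes.exists_extension [Nonempty M] {f : M ↪ₑ[L] N} (hf : RealizesTypes V f)
    (j : M ↪ V) {x y : X → M} (h : tp L x = tp L y) :
    ∃ w : M → N, tp L (Sum.elim id x) = tp L (Sum.elim w (f ∘ y)) :=
  (hf.exists_realize j ((finSat_tp id x).of_tp_eq h)).imp fun _ => tp_eq_of_subset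

end Ultrapower

section ElementaryChain

variable {L : FirstOrder.Language.{u, v}}

theorem realize_directLimit_of {ι : Type*} [Preorder ι] [IsDirectedOrder ι] [Nonempty ι]
    {G : ι → Type*} [∀ i, L.Structure (G i)] {f : ∀ i j, i ≤ j → G i ↪[L] G j}
    [DirectedSystem G fun i j h => f i j h]
    (hf : ∀ i j h, ∃ e : G i ↪ₑ[L] G j, ⇑e = f i j h) {α : Type*} {k : ℕ}
    (φ : L.BoundedFormula α k) (i : ι) (v : α → G i) (xs : Fin k → G i) :
    φ.Realize (DirectLimit.of L ι G f i ∘ v) (DirectLimit.of L ι G f i ∘ xs) ↔ φ.Realize v xs := by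
  induction φ generalizing i with
  | falsum => rfl
  | equal t₁ t₂ =>
    simp only [BoundedFormula.Realize, ← Sum.comp_elim, HomClass.realize_term]
    exact (DirectLimit.of L ι G f i).injective.eq_iff
  | rel R ts =>
    simp only [BoundedFormula.Realize, ← Sum.comp_elim, HomClass.realize_term]
    exact (DirectLimit.of L ι G f i).map_rel R fun i => (ts i).realize (Sum.elim v xs)
  | imp _ _ ih₁ ih₂ => simp only [BoundedFormula.Realize, ih₁, ih₂]
  | all φ ih =>
    refine ⟨fun h a => ?_, fun h a => ?_⟩
    · rw [← ih, Fin.comp_snoc]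
      exact h _
    · obtain ⟨j, y, rfl⟩ := DirectLimit.exists_of a
      obtain ⟨k, hik, hjk⟩ := exists_ge_ge i j
      obtain ⟨e, he⟩ := hf i k hik
      have hof : DirectLimit.of L ι G f k ∘ e = DirectLimit.of L ι G f i := by
        ext x
        simp only [he, Function.comp_apply, DirectLimit.of_f]
      have hy := (ih k _ _).2 ((e.map_boundedFormula φ.all v xs).2 h (f j k hjk y))
      rwa [Fin.comp_snoc, DirectLimit.of_f, ← Function.comp_assoc, ← Function.comp_assoc, hof] at hy

theorem exists_elementaryEmbedding_eq_natLERec {G : ℕ → Type*} [∀ n, L.Structure (G n)]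
    (g : ∀ n, G n ↪ₑ[L] G (n + 1)) {m n : ℕ} (h : m ≤ n) :
    ∃ e : G m ↪ₑ[L] G n, ⇑e = DirectedSystem.natLERec (fun n => (g n).toEmbedding) m n h := by
  induction n, h using Nat.le_induction with
  | base => exact ⟨.refl L _, by ext x; simp [Nat.leRecOn_self]⟩
  | succ n h ih =>
    obtain ⟨e, he⟩ := ih
    refine ⟨(g n).comp e, funext fun x => ?_⟩
    rw [DirectedSystem.coe_natLERec] at he
    simp [he, Nat.leRecOn_succ h]

theorem exists_limit_of_elementaryChain {G : ℕ → Type w} [∀ n, L.Structure (G n)]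
    (g : ∀ n, G n ↪ₑ[L] G (n + 1)) :
    ∃ (S : Type w) (_ : L.Structure S) (j : ∀ n, G n ↪ₑ[L] S),
      (∀ n, j (n + 1) ∘ g n = j n) ∧ ⋃ n, range (j n) = univ := by
  let f := DirectedSystem.natLERec fun n => (g n).toEmbedding
  let j (n : ℕ) : G n ↪ₑ[L] Language.DirectLimit G f :=
    ⟨DirectLimit.of L ℕ G f n, fun k φ x => by
      rw [Formula.Realize, Formula.Realize, ← realize_directLimit_of
        (fun m n h => exists_elementaryEmbedding_eq_natLERec g h) φ n x default]
      exact iff_of_eq (congrArg _ (Subsingleton.elim _ _))⟩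
  refine ⟨Language.DirectLimit G f, inferInstance, j, fun n => funext fun x => ?_,
    eq_univ_of_forall fun s => ?_⟩
  · have hgf : g n x = f n (n + 1) n.le_succ x := by simp [f, Nat.leRecOn_succ']
    exact (congrArg _ hgf).trans DirectLimit.of_f
  · obtain ⟨n, x, rfl⟩ := DirectLimit.exists_of s
    exact mem_iUnion.2 ⟨n, x, rfl⟩

end ElementaryChain

section Saturated

variable {L : FirstOrder.Language.{u, v}} {S : Type*} [L.Structure S]

variable (L S) in
/-- The structure is `ℵ₀`-saturated, for types in countably many variables, and strongly
`ℵ₀`-homogeneous. -/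
structure IsSaturatedHomogeneous : Prop where
  exists_realize {X Y : Type} [Finite X] [Countable Y] (a : X → S) (p : Set (L.Formula (Y ⊕ X))) :
    FinSat a p → ∃ y : Y → S, p ⊆ tp L (Sum.elim y a)
  exists_equiv {X : Type} [Finite X] (a b : X → S) :
    tp L a = tp L b → ∃ e : S ≃[L] S, ∀ i, e (a i) = b i

theorem IsSaturatedHomogeneous.exists_tp_eq (hS : IsSaturatedHomogeneous L S) {A : Type*}
    [L.Structure A] [Nonempty A] (h : A ≅[L] S) {Y : Type} [Countable Y] (x : Y → A) :
    ∃ y : Y → S, tp L x = tp L y := by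
  have := h.nonempty
  obtain ⟨y, hy⟩ := hS.exists_realize (Empty.elim) _
    ((finSat_tp x Empty.elim).of_tp_eq (tp_eq_of_isEmpty h Empty.elim Empty.elim))
  exact ⟨y, tp_comp_eq (tp_eq_of_subset hy) Sum.inl⟩

variable {G : ℕ → Type*} [∀ n, L.Structure (G n)]
  {g : ∀ n, G n ↪ₑ[L] G (n + 1)} {j : ∀ n, G n ↪ₑ[L] S}

theorem monotone_range_of_elementaryChain (hj : ∀ n, j (n + 1) ∘ g n = j n) :
    Monotone fun n => range (j n) :=
  monotone_nat_of_le_succ fun n => hj n ▸ range_comp_subset_range (g n) (j (n + 1))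

variable [∀ n, Nonempty (G n)]

theorem exists_realize_of_elementaryChain (hg : ∀ n, RealizesTypes (ℕ ⊕ G n) (g n))
    (hj : ∀ n, j (n + 1) ∘ g n = j n) (hS : ⋃ n, range (j n) = univ) {X Y : Type*} [Finite X]
    [Countable Y] (a : X → S) {p : Set (L.Formula (Y ⊕ X))} (hp : FinSat a p) :
    ∃ y : Y → S, p ⊆ tp L (Sum.elim y a) := by
  obtain ⟨n, hn⟩ : ∃ n, range a ⊆ range (j n) :=
    (monotone_range_of_elementaryChain hj).directed_le.exists_mem_subset_of_finset_subset_biUnion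
      (s := (finite_range a).toFinset) (by simp [hS]) |>.imp fun n hn => by simpa using hn
  choose b hb using fun i => hn ⟨i, rfl⟩
  obtain rfl : j n ∘ b = a := funext hb
  have : Nonempty S := .map (j n) inferInstance
  obtain ⟨e, he⟩ := exists_injective_nat Y
  obtain ⟨y, hy⟩ := (hg n).exists_realize ⟨_, Sum.inl_injective.comp he⟩
    (hp.of_tp_eq (tp_elementaryEmbedding _ _))
  refine ⟨j (n + 1) ∘ y, ?_⟩
  rwa [← hj n, Function.comp_assoc, ← Sum.comp_elim, tp_elementaryEmbedding]

theorem exists_extension_of_elementaryChain (hg : ∀ n, RealizesTypes (ℕ ⊕ G n) (g n))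
    (hj : ∀ n, j (n + 1) ∘ g n = j n) {n : ℕ} {R : Set (S × S)} (hR : IsElementaryRel L R)
    (hRn : R ⊆ range (j n) ×ˢ range (j n)) :
    ∃ R', IsElementaryRel L R' ∧ R' ⊆ range (j (n + 1)) ×ˢ range (j (n + 1)) ∧ R ⊆ R' ∧
      range (j n) ⊆ Prod.fst '' R' := by
  choose x hx using fun p : R => (hRn p.2).1
  choose y hy using fun p : R => (hRn p.2).2
  have hxy : tp L x = tp L y := by
    rw [← tp_elementaryEmbedding (j n) x, ← tp_elementaryEmbedding (j n) y]
    simpa only [Function.comp_def, hx, hy] using hR.tp_eq fun p : R => p.2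
  obtain ⟨w, hw⟩ := (hg n).exists_extension ⟨_, Sum.inr_injective⟩ hxy
  let F : G n ⊕ R → S × S := Sum.elim (fun m => (j n m, j (n + 1) (w m))) Subtype.val
  have hF₁ : (fun z => (F z).1) = j n ∘ Sum.elim id x := by
    ext (m | p)
    exacts [rfl, (hx p).symm]
  have hF₂ : (fun z => (F z).2) = j (n + 1) ∘ Sum.elim w (g n ∘ y) := by
    ext (m | p)
    exacts [rfl, (hy p).symm.trans (congrFun (hj n) _).symm]
  refine ⟨range F, ?_, ?_, fun p hp => ⟨.inr ⟨p, hp⟩, rfl⟩, ?_⟩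
  · rw [isElementaryRel_range_iff, hF₁, hF₂, tp_elementaryEmbedding, tp_elementaryEmbedding, hw]
  · have hmono := monotone_range_of_elementaryChain hj n.le_succ
    rintro _ ⟨m | p, rfl⟩
    · exact ⟨hmono ⟨m, rfl⟩, w m, rfl⟩
    · exact prod_mono hmono hmono (hRn p.2)
  · rintro _ ⟨m, rfl⟩
    exact ⟨F (.inl m), ⟨_, rfl⟩, rfl⟩

theorem exists_equiv_of_elementaryChain (hg : ∀ n, RealizesTypes (ℕ ⊕ G n) (g n))
    (hj : ∀ n, j (n + 1) ∘ g n = j n) (hS : ⋃ n, range (j n) = univ) {X : Type*} [Finite X]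
    {a b : X → S} (hab : tp L a = tp L b) : ∃ e : S ≃[L] S, ∀ i, e (a i) = b i := by
  have hmono := monotone_range_of_elementaryChain hj
  let 𝓡 : Set (Set (S × S)) :=
    {R | IsElementaryRel L R ∧ ∃ n, R ⊆ range (j n) ×ˢ range (j n)}
  have hforth : ∀ R ∈ 𝓡, ∀ n, ∃ R' ∈ 𝓡, R ⊆ R' ∧ range (j n) ⊆ Prod.fst '' R' := by
    rintro R ⟨hR, m, hm⟩ n
    have hmax := prod_mono (hmono (le_max_left m n)) (hmono (le_max_left m n))
    obtain ⟨R', hR', hsub, hRR', hfst⟩ :=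
      exists_extension_of_elementaryChain hg hj hR (hm.trans hmax)
    exact ⟨R', ⟨hR', _, hsub⟩, hRR', (hmono (le_max_right m n)).trans hfst⟩
  have hswap : ∀ R ∈ 𝓡, Prod.swap ⁻¹' R ∈ 𝓡 := fun R ⟨hR, n, hn⟩ =>
    ⟨hR.swap, n, fun p hp => (hn hp).symm⟩
  have hback : ∀ R ∈ 𝓡, ∀ n, ∃ R' ∈ 𝓡, R ⊆ R' ∧ range (j n) ⊆ Prod.snd '' R' := by
    intro R hR n
    obtain ⟨R', hR', hRR', hfst⟩ := hforth _ (hswap R hR) n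
    refine ⟨_, hswap R' hR', fun p hp => hRR' hp, fun s hs => ?_⟩
    obtain ⟨p, hp, rfl⟩ := hfst hs
    exact ⟨p.swap, hp, rfl⟩
  have hab' : range (fun i => (a i, b i)) ∈ 𝓡 := by
    refine ⟨isElementaryRel_range_iff.2 hab, ?_⟩
    obtain ⟨n, hn⟩ := hmono.directed_le.exists_mem_subset_of_finset_subset_biUnion
      (s := ((finite_range a).union (finite_range b)).toFinset) (by simp [hS])
    rw [Finite.coe_toFinset, union_subset_iff] at hn
    exact ⟨n, range_subset_iff.2 fun i => ⟨hn.1 ⟨i, rfl⟩, hn.2 ⟨i, rfl⟩⟩⟩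
  obtain ⟨e, he⟩ := exists_equiv_of_backAndForth hS hS (fun R hR => hR.1) hforth hback hab'
  exact ⟨e, fun i => he _ ⟨i, rfl⟩⟩

end Saturated

theorem exists_isSaturatedHomogeneous (L : FirstOrder.Language.{u, u}) (M : Type u) [L.Structure M]
    [Nonempty M] :
    ∃ (S : Type u) (_ : L.Structure S), (M ≅[L] S) ∧ IsSaturatedHomogeneous L S := by
  have hnext (A : (∅ : L.Theory).ModelType) :
      ∃ (B : (∅ : L.Theory).ModelType) (f : A ↪ₑ[L] B), RealizesTypes (ℕ ⊕ A) f := by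
    obtain ⟨N, iN, f, hf⟩ := exists_realizesTypes L A (ℕ ⊕ A)
    have : Nonempty N := .map f inferInstance
    exact ⟨.of ∅ N, f, hf⟩
  choose next f hf using hnext
  obtain ⟨G, g, hM, hg⟩ : ∃ (G : ℕ → (∅ : L.Theory).ModelType) (g : ∀ n, G n ↪ₑ[L] G (n + 1)),
      (M ≅[L] G 0) ∧ ∀ n, RealizesTypes (ℕ ⊕ G n) (g n) := by
    refine ⟨fun n => n.rec (.of ∅ M) fun _ => next, fun n => f _, ?_, fun n => hf _⟩
    exact Eq.refl (L.completeTheory M)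
  obtain ⟨S, iS, j, hj, hS⟩ := exists_limit_of_elementaryChain g
  exact ⟨S, iS, hM.trans (j 0).elementarilyEquivalent,
    ⟨fun a _ => exists_realize_of_elementaryChain hg hj hS a,
      fun _ _ => exists_equiv_of_elementaryChain hg hj hS⟩⟩

section OmittingTypes

variable {L : FirstOrder.Language.{u, v}} {M : Type w} {N : Type*} [L.Structure M] [L.Structure N]
variable {I Y : Type*} {X : Type x}

theorem realize_congr_freeVar [DecidableEq X] {φ : L.Formula X} {s t : X → M}
    (h : ∀ x ∈ φ.freeVarFinset, s x = t x) : φ.Realize s ↔ φ.Realize t :=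
  (BoundedFormula.realize_restrictFreeVar (f := id) (v := fun x => s x) s
    fun _ => rfl).symm.trans <|
    BoundedFormula.realize_restrictFreeVar (f := id) t fun x => h x x.2

theorem forall_realize_of_elementarilyEquivalent (h : M ≅[L] N) {φ : L.Formula X}
    (hφ : ∀ x : X → M, φ.Realize x) (y : X → N) [Nonempty N] : φ.Realize y :=
  by_contra fun hy =>
    let ⟨x, hx⟩ := exists_realize_of_elementarilyEquivalent h.symm (φ := φ.not) hy
    hx (hφ x)

/-- A set of formulas is dense in a structure if every formula realized there is implied, in the
structure, by a realized member of the set. -/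
def IsDenseIn (M : Type*) [L.Structure M] (D : Set (L.Formula X)) : Prop :=
  ∀ ψ : L.Formula X, (∃ s : X → M, ψ.Realize s) →
    ∃ χ ∈ D, (∃ s : X → M, χ.Realize s) ∧ ∀ s : X → M, χ.Realize s → ψ.Realize s

theorem exists_generic [Nonempty M] [Countable I] {D : I → Set (L.Formula X)}
    (hD : ∀ i, IsDenseIn M (D i)) :
    ∃ (N : Type (max u v w x)) (_ : L.Structure N) (_ : M ↪ₑ[L] N) (s : X → N),
      ∀ i, ∃ χ ∈ D i, χ.Realize s := by
  classical
  have := Encodable.ofCountable I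
  let Q := {ψ : L.Formula X // ∃ s : X → M, ψ.Realize s}
  let _ : Preorder Q := Preorder.lift fun ψ => OrderDual.toDual {s : X → M | ψ.1.Realize s}
  let 𝒟 (i : I) : Order.Cofinal Q := ⟨{ψ | ψ.1 ∈ D i}, fun ψ =>
    let ⟨χ, hχ, hs, h⟩ := hD i ψ ψ.2; ⟨⟨χ, hs⟩, hχ, h⟩⟩
  let ψ : ℕ → Q := Order.sequenceOfCofinals ⟨⊤, fun _ => Classical.arbitrary M, by simp⟩ 𝒟
  have hψ : Monotone ψ := Order.sequenceOfCofinals.monotone _ _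
  have hsat : FinSat (Empty.elim : Empty → M)
      (range fun n => (ψ n).1.relabel (Sum.inl : X → X ⊕ Empty)) := by
    intro q hq
    choose! n hn using fun φ (hφ : φ ∈ q) => hq hφ
    obtain ⟨s, hs⟩ := (ψ (q.sup n)).2
    refine ⟨s, fun φ hφ => ?_⟩
    rw [← hn φ hφ, mem_tp, Formula.realize_relabel, Sum.elim_comp_inl]
    exact hψ (Finset.le_sup hφ) hs
  obtain ⟨N, _, f, hf⟩ := exists_realizesTypes L M X
  obtain ⟨s, hs⟩ := hf.exists_realize (.refl X) hsat
  refine ⟨N, _, f, s, fun i => ⟨(ψ (Encodable.encode i + 1)).1,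
    Order.sequenceOfCofinals.encode_mem _ 𝒟 i, ?_⟩⟩
  simpa [Formula.realize_relabel] using hs (mem_range_self (Encodable.encode i + 1))

theorem exists_elementarySubstructure_eq_range {s : X → N}
    (h : ∀ χ : L.Formula (Unit ⊕ X), (∃ a, χ.Realize (Sum.elim (fun _ => a) s)) →
      ∃ x, χ.Realize (Sum.elim (fun _ => s x) s)) :
    ∃ K : L.ElementarySubstructure N, (K : Set N) = range s := by
  have hmeets : L.MeetsDefinable (range s) := by
    rintro D ⟨a, ha⟩ hD
    obtain ⟨χ, hχ⟩ := definable_iff_exists_formula_sum.1 hD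
    let χ' : L.Formula (Unit ⊕ X) :=
      χ.relabel (Sum.elim (Sum.inr ∘ rangeSplitting s) fun _ => Sum.inl ())
    have key (b : N) : b ∈ D ↔ χ'.Realize (Sum.elim (fun _ => b) s) := by
      refine (Set.ext_iff.1 hχ fun _ => b).trans ?_
      rw [Formula.realize_relabel, Sum.comp_elim, ← Function.comp_assoc, Sum.elim_comp_inr,
        comp_rangeSplitting]
      rfl
    obtain ⟨x, hx⟩ := h χ' ⟨a, (key a).1 ha⟩
    exact ⟨s x, (key _).2 hx, mem_range_self x⟩
  exact ⟨hmeets.toElementarySubstructure, hmeets.closure_eq_self⟩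

/-- The formulas `ψ(s)` that, in `M`, name a variable as a witness of `∃ a, χ(a, s)`, if there is
any. -/
def witnessing (M : Type*) [L.Structure M] (χ : L.Formula (Unit ⊕ X)) : Set (L.Formula X) :=
  {ψ | ∃ x, ∀ s : X → M, ψ.Realize s →
    ∀ a, χ.Realize (Sum.elim (fun _ => a) s) → χ.Realize (Sum.elim (fun _ => s x) s)}

/-- The formulas `ψ(s)` that, in `M`, prevent the subtuple of `s` indexed by `t` from realizing
`p`. -/
def omitting (M : Type*) [L.Structure M] (p : Set (L.Formula X)) (t : X → Y) : Set (L.Formula Y) :=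
  {ψ | ∃ φ ∈ p, ∀ s : Y → M, ψ.Realize s → ¬ φ.Realize (s ∘ t)}

variable (M) in
theorem isDenseIn_witnessing [Infinite X] (χ : L.Formula (Unit ⊕ X)) :
    IsDenseIn M (witnessing M χ) := by
  classical
  intro ψ hψ
  by_cases h : ∃ (s : X → M) (a : M), ψ.Realize s ∧ χ.Realize (Sum.elim (fun _ => a) s)
  · obtain ⟨s, a, hs, ha⟩ := h
    obtain ⟨x, hx⟩ := Infinite.exists_notMem_finset (ψ.freeVarFinset ∪ χ.freeVarFinset.toRight)
    rw [Finset.mem_union, not_or, Finset.mem_toRight] at hx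
    have hχ (s : X → M) : (χ.relabel (Sum.elim (fun _ => x) id)).Realize s ↔
        χ.Realize (Sum.elim (fun _ => s x) s) := by
      rw [Formula.realize_relabel, Sum.comp_elim]
      rfl
    refine ⟨ψ ⊓ χ.relabel (Sum.elim (fun _ => x) id),
      ⟨x, fun s hs a _ => (hχ s).1 (Formula.realize_inf.1 hs).2⟩,
      ⟨Function.update s x a, Formula.realize_inf.2 ⟨?_, (hχ _).2 ?_⟩⟩,
      fun s hs => (Formula.realize_inf.1 hs).1⟩
    · refine (realize_congr_freeVar fun y hy => ?_).1 hs
      have hyx : y ≠ x := by rintro rfl; exact hx.1 hy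
      exact (Function.update_of_ne hyx _ _).symm
    · refine (realize_congr_freeVar ?_).1 ha
      rintro (_ | y) hy
      · exact (Function.update_self x a s).symm
      · have hyx : y ≠ x := by rintro rfl; exact hx.2 hy
        exact (Function.update_of_ne hyx _ _).symm
  · push Not at h
    exact ⟨ψ, ⟨Classical.arbitrary X, fun s hs a ha => absurd ha (h s a hs)⟩, hψ, fun _ => id⟩

theorem isDenseIn_omitting [Nonempty M] [Finite X] {p : Set (L.Formula X)}
    (hp : ∀ θ : L.Formula X, (∃ x : X → M, θ.Realize x) →
      ∃ φ ∈ p, ∃ x : X → M, θ.Realize x ∧ ¬ φ.Realize x) (t : X → Y) :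
    IsDenseIn M (omitting M p t) := by
  rintro ψ ⟨s, hs⟩
  let θ : L.Formula X := exsLeft <| ψ.relabel Sum.inl ⊓ Formula.iInf fun x : X =>
    Term.equal (Term.var (Sum.inl (t x))) (Term.var (Sum.inr x))
  have hθ (x : X → M) : θ.Realize x ↔ ∃ s : Y → M, ψ.Realize s ∧ s ∘ t = x := by
    simp [θ, realize_exsLeft, Formula.realize_iInf, Formula.realize_relabel, funext_iff]
  obtain ⟨φ, hφ, x, hx, hφx⟩ := hp θ ⟨s ∘ t, (hθ _).2 ⟨s, hs, rfl⟩⟩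
  obtain ⟨s', hs', rfl⟩ := (hθ x).1 hx
  refine ⟨ψ ⊓ (φ.relabel t).not, ⟨φ, hφ, fun s hs => ?_⟩, ⟨s', ?_⟩,
    fun s hs => (Formula.realize_inf.1 hs).1⟩
  · simpa [Formula.realize_relabel] using (Formula.realize_inf.1 hs).2
  · simpa [Formula.realize_relabel] using ⟨hs', hφx⟩

theorem exists_realize_of_mem_witnessing (h : M ≅[L] N) {χ : L.Formula (Unit ⊕ X)} {ψ : L.Formula X}
    (hψ : ψ ∈ witnessing M χ) {s : X → N} (hs : ψ.Realize s) {a : N}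
    (ha : χ.Realize (Sum.elim (fun _ => a) s)) : ∃ x, χ.Realize (Sum.elim (fun _ => s x) s) := by
  obtain ⟨x, hx⟩ := hψ
  have : Nonempty N := ⟨a⟩
  have hreal := forall_realize_of_elementarilyEquivalent h (φ := (ψ.relabel Sum.inr).imp <|
    χ.imp <| χ.relabel (Sum.elim (fun _ => Sum.inr x) Sum.inr)) ?_ (Sum.elim (fun _ => a) s)
  · simp only [Formula.realize_imp, Formula.realize_relabel, Sum.elim_comp_inr,
      Sum.comp_elim] at hreal
    exact ⟨x, hreal hs ha⟩
  · intro y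
    simp only [Formula.realize_imp, Formula.realize_relabel, Sum.comp_elim]
    intro hy hχ
    exact hx _ hy (y (.inl ())) ((Sum.elim_comp_inl_inr y).symm ▸ hχ)

theorem exists_not_realize_of_mem_omitting (h : M ≅[L] N) {p : Set (L.Formula X)} {t : X → Y}
    {ψ : L.Formula Y} (hψ : ψ ∈ omitting M p t) [Nonempty N] {s : Y → N} (hs : ψ.Realize s) :
    ∃ φ ∈ p, ¬ φ.Realize (s ∘ t) := by
  obtain ⟨φ, hφ, hψφ⟩ := hψ
  have := forall_realize_of_elementarilyEquivalent h (φ := ψ.imp (φ.relabel t).not)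
    (by simpa [Formula.realize_relabel] using hψφ) s
  exact ⟨φ, hφ, by simpa [Formula.realize_relabel, hs] using this⟩

theorem exists_countable_omitting [Countable L.Symbols] [Nonempty M] [Finite X]
    {p : Set (L.Formula X)} (hp : ∀ θ : L.Formula X, (∃ x : X → M, θ.Realize x) →
      ∃ φ ∈ p, ∃ x : X → M, θ.Realize x ∧ ¬ φ.Realize x) :
    ∃ (N : Type (max u v w)) (_ : L.Structure N), Countable N ∧ (M ≅[L] N) ∧
      ∀ x : X → N, ∃ φ ∈ p, ¬ φ.Realize x := by
  obtain ⟨N, _, f, s, hs⟩ := exists_generic (M := M) (X := ℕ)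
    (I := L.Formula (Unit ⊕ ℕ) ⊕ (X → ℕ)) (D := Sum.elim (witnessing M) (omitting M p))
    (Sum.rec (isDenseIn_witnessing M) (isDenseIn_omitting hp))
  have : Nonempty N := ⟨s 0⟩
  have hMN : M ≅[L] N := f.elementarilyEquivalent
  obtain ⟨K, hK⟩ := exists_elementarySubstructure_eq_range (L := L) (s := s) fun χ ⟨a, ha⟩ =>
    let ⟨_, hψ, hψs⟩ := hs (.inl χ)
    exists_realize_of_mem_witnessing hMN hψ hψs ha
  have hK' (k : K) : ∃ m, s m = k := by
    simpa only [← SetLike.mem_coe, hK, mem_range] using k.2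
  choose t ht using hK'
  refine ⟨K, inferInstance, ?_, hMN.trans K.subtype.elementarilyEquivalent.symm, fun x => ?_⟩
  · exact (hK ▸ countable_range s : (K : Set N).Countable).to_subtype
  · obtain ⟨ψ, hψ, hψs⟩ := hs (.inr (t ∘ x))
    obtain ⟨φ, hφ, hφs⟩ := exists_not_realize_of_mem_omitting hMN hψ hψs
    refine ⟨φ, hφ, fun h => hφs ?_⟩
    have hx : s ∘ t ∘ x = K.subtype ∘ x := funext fun i => ht (x i)
    rw [hx]
    exact (K.subtype.map_formula φ x).2 h

end OmittingTypes

section RyllNardzewski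

variable {L : FirstOrder.Language.{u, v}} {M N : Type*} [L.Structure M] [L.Structure N]
variable {X : Type*}

theorem exists_countable_elementarySubstructure [Countable L.Symbols] {A : Set M}
    (hA : A.Countable) : ∃ K : L.ElementarySubstructure M, A ⊆ K ∧ Countable K := by
  rcases le_total (Cardinal.mk M) Cardinal.aleph0 with hM | hM
  · exact ⟨⊤, subset_univ A, Cardinal.mk_le_aleph0_iff.1 <| (Cardinal.mk_subtype_le _).trans hM⟩
  · obtain ⟨K, hAK, hK⟩ := exists_elementarySubstructure_card_eq L A Cardinal.aleph0.{0} le_rfl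
      (by simpa using hA.le_aleph0)
      (by simpa [Language.card] using Cardinal.mk_le_aleph0_iff.2 ‹Countable L.Symbols›)
      (by simpa using hM)
    exact ⟨K, hAK, Cardinal.mk_le_aleph0_iff.1 (by simpa using hK.le)⟩

variable (L M) in
/-- Only finitely many complete types of `n`-tuples are realized, for each `n`. -/
def FinTypes : Prop :=
  ∀ n, (range (tp L : (Fin n → M) → Set (L.Formula (Fin n)))).Finite

variable (M) in
/-- All tuples of `M` satisfying the formula have the same complete type. -/
def Isolates (θ : L.Formula X) : Prop :=
  ∀ x y : X → M, θ.Realize x → θ.Realize y → tp L x = tp L y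

theorem finite_range_tp_of_isolates {q : Finset (L.Formula X)} (hq : ∀ θ ∈ q, Isolates M θ)
    (h : ∀ x : X → M, ∃ θ ∈ q, θ.Realize x) :
    (range (tp L : (X → M) → Set (L.Formula X))).Finite := by
  choose θ hθq hθ using h
  refine (q.finite_toSet.image fun θ => {φ | ∃ x : X → M, θ.Realize x ∧ φ.Realize x}).subset ?_
  rintro _ ⟨x, rfl⟩
  refine ⟨θ x, hθq x, Subset.antisymm ?_ fun φ hφ => ⟨x, hθ x, hφ⟩⟩
  rintro φ ⟨y, hy, hφ⟩
  exact (realize_iff_of_tp_eq (hq _ (hθq x) y x hy (hθ x)) φ).1 hφ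

theorem finSat_not_of_infinite_range_tp
    (h : ¬ (range (tp L : (X → M) → Set (L.Formula X))).Finite) :
    FinSat (L := L) (Empty.elim : Empty → M)
      {φ | ∃ θ, Isolates M θ ∧ φ = (θ.relabel (Sum.inl : X → X ⊕ Empty)).not} := by
  classical
  intro q hq
  by_contra! hcon
  choose! θ hθ hθq using fun φ (hφ : φ ∈ q) => hq hφ
  refine h (finite_range_tp_of_isolates (q := q.image θ) ?_ fun x => ?_)
  · simpa using hθ
  · obtain ⟨φ, hφ, hx⟩ := Set.not_subset.1 (hcon x)
    rw [hθq φ hφ] at hx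
    refine ⟨θ φ, Finset.mem_image_of_mem θ hφ, ?_⟩
    simpa [Formula.realize_relabel] using hx

theorem exists_countable_forall_tp_ne {L : FirstOrder.Language.{u, u}} [Countable L.Symbols]
    {M : Type u} [L.Structure M] [Nonempty M] {N : Type*} [L.Structure N] [Finite X] {b : X → N}
    (hb : ∀ θ ∈ tp L b, ¬ Isolates M θ) :
    ∃ (K : Type u) (_ : L.Structure K), Countable K ∧ (M ≅[L] K) ∧
      ∀ x : X → K, tp L x ≠ tp L b := by
  obtain ⟨K, _, hK, hMK, h⟩ := exists_countable_omitting (M := M) (p := tp L b) fun θ ⟨x, hx⟩ => by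
    by_contra! hcon
    have htp (y : X → M) (hy : θ.Realize y) : tp L y = tp L b :=
      (tp_eq_of_subset fun φ hφ => hcon φ hφ y hy).symm
    have hθb : θ ∈ tp L b := htp x hx ▸ hx
    exact hb θ hθb fun y z hy hz => (htp y hy).trans (htp z hz).symm
  refine ⟨K, _, hK, hMK, fun x hx => ?_⟩
  obtain ⟨φ, hφ, hφx⟩ := h x
  exact hφx (hx ▸ hφ :)

theorem finTypes_of_categorical {L : FirstOrder.Language.{u, u}} [Countable L.Symbols] {M : Type u}
    [L.Structure M] [Nonempty M]
    (h : ∀ (N₁ N₂ : Type u) [L.Structure N₁] [L.Structure N₂], Countable N₁ → Countable N₂ →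
      (M ≅[L] N₁) → (M ≅[L] N₂) → Nonempty (N₁ ≃[L] N₂)) : FinTypes L M := by
  intro n
  by_contra hinf
  obtain ⟨S, _, f, hf⟩ := exists_realizesTypes L M (Fin n)
  obtain ⟨b, hb⟩ := hf.exists_realize (.refl _) (finSat_not_of_infinite_range_tp hinf)
  have hb' : ∀ θ ∈ tp L b, ¬ Isolates M θ := fun θ hθ hM => by
    simpa [Formula.realize_relabel, mem_tp.1 hθ] using hb ⟨θ, hM, rfl⟩
  obtain ⟨N₁, _, hN₁, hMN₁, hom⟩ := exists_countable_forall_tp_ne hb'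
  obtain ⟨N₂, hbN₂, hN₂⟩ := exists_countable_elementarySubstructure (L := L) (countable_range b)
  obtain ⟨e⟩ := h N₂ N₁ hN₂ hN₁
    (f.elementarilyEquivalent.trans N₂.subtype.elementarilyEquivalent.symm) hMN₁
  let b' (i : Fin n) : N₂ := ⟨b i, hbN₂ ⟨i, rfl⟩⟩
  exact hom (e ∘ b') ((tp_equiv e b').trans (tp_elementaryEmbedding N₂.subtype b').symm)

theorem FinTypes.finite_range_tp (h : FinTypes L M) [Finite X] :
    (range (tp L : (X → M) → Set (L.Formula X))).Finite := by
  obtain ⟨n, ⟨e⟩⟩ := Finite.exists_equiv_fin X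
  refine ((h n).image fun p => {φ | φ.relabel e ∈ p}).subset ?_
  rintro _ ⟨x, rfl⟩
  refine ⟨_, ⟨x ∘ e.symm, rfl⟩, ?_⟩
  ext φ
  simp [Formula.realize_relabel, Function.comp_assoc]

theorem FinTypes.exists_isolating (h : FinTypes L M) (hMN : M ≅[L] N) [Nonempty N] [Finite X]
    {K : Type*} [L.Structure K] (x : X → K) :
    ∃ θ ∈ tp L x, ∀ y : X → N, θ ∈ tp L y → tp L x = tp L y := by
  have hsep (r : range (tp L : (X → M) → Set (L.Formula X))) :
      ∃ φ ∈ tp L x, φ ∈ r.1 → tp L x = r.1 := by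
    obtain ⟨_, y, rfl⟩ := r
    by_contra! hcon
    exact (hcon ⊤ (by simp)).2 (tp_eq_of_subset fun φ hφ => (hcon φ hφ).1)
  choose φ hφ hφr using hsep
  have := h.finite_range_tp (X := X).to_subtype
  refine ⟨Formula.iInf φ, Formula.realize_iInf.2 hφ, fun y hy => tp_eq_of_subset fun χ hχ => ?_⟩
  refine Formula.realize_imp.1 (forall_realize_of_elementarilyEquivalent hMN (fun z => ?_) y) hy
  refine Formula.realize_imp.2 fun hz => ?_
  have hxz := hφr ⟨_, z, rfl⟩ (Formula.realize_iInf.1 hz _)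
  exact (realize_iff_of_tp_eq hxz χ).1 hχ

theorem FinTypes.exists_insert (h : FinTypes L M) {K : Type*} [L.Structure K] (hMN : M ≅[L] N)
    [Nonempty N] {R : Set (K × N)} (hR : R.Finite) (hRe : IsElementaryRel L R) (a : K) :
    ∃ b, IsElementaryRel L (insert (a, b) R) := by
  have := hR.to_subtype
  have : Nonempty K := ⟨a⟩
  obtain ⟨θ, hθ, hN⟩ := h.exists_isolating hMN (Sum.elim (fun _ : Unit => a) fun p : R => p.1.1)
  obtain ⟨b, hb⟩ := exists_realize_of_tp_eq hRe hθ
  refine ⟨b (), ?_⟩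
  have hF : insert (a, b ()) R =
      range (Sum.elim (fun _ : Unit => (a, b ())) ((↑) : R → K × N)) := by
    simp [Sum.elim_range]
  rw [hF, isElementaryRel_range_iff]
  refine (congrArg (tp L) ?_).trans <| (hN _ hb).trans (congrArg (tp L) ?_) <;>
    ext (_ | _) <;> rfl

theorem FinTypes.exists_insert_right (h : FinTypes L M) {K : Type*} [L.Structure K]
    (hMK : M ≅[L] K) [Nonempty K] {R : Set (K × N)} (hR : R.Finite) (hRe : IsElementaryRel L R)
    (b : N) : ∃ a, IsElementaryRel L (insert (a, b) R) := by
  obtain ⟨a, ha⟩ := h.exists_insert hMK (hR.preimage Prod.swap_injective.injOn) hRe.swap b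
  refine ⟨a, ?_⟩
  convert ha.swap using 1
  ext ⟨x, y⟩
  simp [and_comm]

theorem FinTypes.nonempty_equiv {K : Type*} [L.Structure K] (h : FinTypes L M) [Countable K]
    [Countable N] (hK : M ≅[L] K) (hN : M ≅[L] N) : Nonempty (K ≃[L] N) := by
  have hKN : K ≅[L] N := hK.symm.trans hN
  let 𝓡 : Set (Set (K × N)) := {R | R.Finite ∧ IsElementaryRel L R}
  have hforth : ∀ R ∈ 𝓡, ∀ a, ∃ S ∈ 𝓡, R ⊆ S ∧ {a} ⊆ Prod.fst '' S := by
    rintro R ⟨hR, hRe⟩ a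
    have : Nonempty N := hKN.nonempty_iff.1 ⟨a⟩
    obtain ⟨b, hb⟩ := h.exists_insert hN hR hRe a
    exact ⟨_, ⟨hR.insert _, hb⟩, subset_insert _ _, by simp⟩
  have hback : ∀ R ∈ 𝓡, ∀ b, ∃ S ∈ 𝓡, R ⊆ S ∧ {b} ⊆ Prod.snd '' S := by
    rintro R ⟨hR, hRe⟩ b
    have : Nonempty K := hKN.nonempty_iff.2 ⟨b⟩
    obtain ⟨a, ha⟩ := h.exists_insert_right hK hR hRe b
    exact ⟨_, ⟨hR.insert _, ha⟩, subset_insert _ _, by simp⟩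
  obtain ⟨e, -⟩ := exists_equiv_of_backAndForth (iUnion_of_singleton K) (iUnion_of_singleton N)
    (fun R hR => hR.2) hforth hback ⟨finite_empty, tp_eq_of_isEmpty hKN _ _⟩
  exact ⟨e⟩

end RyllNardzewski

section ColoredOrders

variable {ι : Type}

/-- A coloring of `M` by unary predicates indexed by `ι`. As a class, it turns every linear order
into an `L_κ`-structure. -/
class Colored (ι M : Type) where
  color : ι → Set M

instance instStructure (M : Type) [LinearOrder M] [Colored ι M] : (CLOLang ι).Structure M :=
  CLOStr ι M Colored.color

instance instColoredSet (M : Type) [Colored ι M] (s : Set M) : Colored ι s :=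
  ⟨subColor Colored.color s⟩

instance instIsRelational : (CLOLang ι).IsRelational := fun _ => inferInstanceAs (IsEmpty Empty)

instance instCountableSymbols [Countable ι] : Countable (CLOLang ι).Symbols := by
  have hrel (n) : Countable ((CLOLang ι).Relations n) :=
    Function.Injective.countable
      (f := fun r : CLORel ι n => match r with | .lt => none | .color i => some i) <| by
        rintro (_ | i) (_ | j) h <;> cases h <;> rfl
  have hfun (n) : Countable ((CLOLang ι).Functions n) := inferInstanceAs (Countable Empty)
  exact inferInstanceAs (Countable ((Σ n, (CLOLang ι).Functions n) ⊕ Σ n, (CLOLang ι).Relations n))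

/-- The relation symbol `<` of `L_κ`. -/
abbrev ltSymb (ι : Type) : (CLOLang ι).Relations 2 := CLORel.lt

/-- The relation symbol `P_i` of `L_κ`. -/
abbrev colorSymb (i : ι) : (CLOLang ι).Relations 1 := CLORel.color i

/-- The formula `x < y`. -/
def ltF {X : Type w} (x y : X) : (CLOLang ι).Formula X :=
  (ltSymb ι).formula₂ (Term.var x) (Term.var y)

variable {M N : Type} [LinearOrder M] [LinearOrder N] [Colored ι M] [Colored ι N]

theorem realize_ltF_iff_relMap {P : Type} [(CLOLang ι).Structure P] {X : Type w} (x y : X)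
    (v : X → P) :
    (ltF x y : (CLOLang ι).Formula X).Realize v ↔ Structure.RelMap (ltSymb ι) ![v x, v y] := by
  rw [ltF, Formula.realize_rel₂]
  rfl

@[simp]
theorem realize_ltF {X : Type w} (x y : X) (v : X → M) :
    (ltF x y : (CLOLang ι).Formula X).Realize v ↔ v x < v y :=
  realize_ltF_iff_relMap x y v

theorem isStrictTotalOrder_of_elementarilyEquivalent [Nonempty M] {P : Type}
    [(CLOLang ι).Structure P] (h : M ≅[CLOLang ι] P) :
    IsStrictTotalOrder P fun x y => Structure.RelMap (ltSymb ι) ![x, y] := by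
  have : Nonempty P := h.nonempty
  have transfer {n : ℕ} {φ : (CLOLang ι).Formula (Fin n)} (hφ : ∀ x : Fin n → M, φ.Realize x)
      (y : Fin n → P) : φ.Realize y := forall_realize_of_elementarilyEquivalent h hφ y
  refine { irrefl := fun x => ?irrefl, trans := fun x y z => ?trans, trichotomous := fun x y => ?_ }
  case irrefl =>
    simpa [realize_ltF_iff_relMap] using
      transfer (φ := (ltF 0 0).not) (fun _ => by simp) ![x]
  case trans =>
    simpa [realize_ltF_iff_relMap, Formula.realize_imp] using
      transfer (φ := (ltF 0 1).imp ((ltF 1 2).imp (ltF 0 2)))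
        (fun _ => by simpa [Formula.realize_imp] using lt_trans) ![x, y, z]
  simpa [realize_ltF_iff_relMap, Formula.realize_imp] using
    transfer (φ := (ltF 0 1).not.imp ((ltF 1 0).not.imp (Term.equal (Term.var 0) (Term.var 1))))
      (fun _ => by simpa [Formula.realize_imp] using fun h₁ h₂ => le_antisymm h₂ h₁) ![x, y]

theorem exists_eq_instStructure [Nonempty M] {P : Type} [hP : (CLOLang ι).Structure P]
    (h : M ≅[CLOLang ι] P) :
    ∃ (_ : LinearOrder P) (_ : Colored ι P), hP = instStructure P := by
  classical
  have := isStrictTotalOrder_of_elementarilyEquivalent h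
  refine ⟨linearOrderOfSTO fun x y => Structure.RelMap (ltSymb ι) ![x, y],
    ⟨fun i => {x | Structure.RelMap (colorSymb i) ![x]}⟩, ?_⟩
  ext n f x
  · exact isEmptyElim f
  · cases f with
    | lt => exact iff_of_eq (congrArg _ (List.ofFn_injective rfl))
    | color i => exact iff_of_eq (congrArg _ (List.ofFn_injective rfl))

/-- A strictly monotone color-preserving map as an embedding of `L_κ`-structures. -/
def embOfStrictMono (f : M → N) (hf : StrictMono f)
    (hc : ∀ (i : ι) x, f x ∈ (Colored.color i : Set N) ↔ x ∈ (Colored.color i : Set M)) :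
    M ↪[CLOLang ι] N where
  toFun := f
  inj' := hf.injective
  map_fun' := fun f => isEmptyElim f
  map_rel' := by
    intro n r x
    cases r with
    | lt => exact hf.lt_iff_lt
    | color i => exact hc i _

/-- The inclusion of a subset, as an embedding of `L_κ`-structures. -/
def valEmb (s : Set M) : s ↪[CLOLang ι] M :=
  embOfStrictMono Subtype.val (fun _ _ h => h) fun _ _ => Iff.rfl

theorem range_valEmb (s : Set M) : range (valEmb (ι := ι) s) = s := Subtype.range_coe

/-- A color-preserving order isomorphism as an isomorphism of `L_κ`-structures. -/
def equivOfOrderIso (e : M ≃o N)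
    (hc : ∀ (i : ι) x, e x ∈ (Colored.color i : Set N) ↔ x ∈ (Colored.color i : Set M)) :
    M ≃[CLOLang ι] N where
  toEquiv := e.toEquiv
  map_fun' := fun f => isEmptyElim f
  map_rel' := (embOfStrictMono e e.strictMono hc).map_rel'

theorem equiv_lt_iff (e : M ≃[CLOLang ι] N) {x y : M} : e x < e y ↔ x < y :=
  e.map_rel (ltSymb ι) ![x, y]

theorem equiv_le_iff (e : M ≃[CLOLang ι] N) {x y : M} : e x ≤ e y ↔ x ≤ y := by
  simpa only [not_lt] using not_congr (equiv_lt_iff e (x := y) (y := x))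

theorem equiv_mem_color_iff (e : M ≃[CLOLang ι] N) {i : ι} {x : M} :
    e x ∈ (Colored.color i : Set N) ↔ x ∈ (Colored.color i : Set M) :=
  e.map_rel (colorSymb i) ![x]

theorem aleph0CatTheory_of_finTypes (h : FinTypes (CLOLang ι) M) :
    Aleph0CatTheory ι ((CLOLang ι).completeTheory M) := by
  intro N₁ N₂ i₁ i₂ c₁ c₂ _ _ h₁ h₂
  let := CLOStr ι N₁ c₁
  let := CLOStr ι N₂ c₂
  exact h.nonempty_equiv (Eq.symm h₁) (Eq.symm h₂)

theorem finTypes_of_aleph0CatTheory [Countable ι] [Nonempty M]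
    (h : Aleph0CatTheory ι ((CLOLang ι).completeTheory M)) : FinTypes (CLOLang ι) M := by
  refine finTypes_of_categorical fun N₁ N₂ s₁ s₂ hc₁ hc₂ h₁ h₂ => ?_
  obtain ⟨i₁, c₁, rfl⟩ := exists_eq_instStructure h₁
  obtain ⟨i₂, c₂, rfl⟩ := exists_eq_instStructure h₂
  exact h N₁ N₂ i₁ i₂ c₁.color c₂.color hc₁ hc₂ (Eq.symm h₁) (Eq.symm h₂)

end ColoredOrders

section Relativization

variable {L : FirstOrder.Language.{u, v}} {α : Type w} {β : Type x}

/-- Relativization of the quantifiers of a formula to the set defined by `θ` with parameters in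
`β`. -/
def relativize (θ : L.Formula (β ⊕ Unit)) : ∀ {n}, L.BoundedFormula α n → L.BoundedFormula (β ⊕ α) n
  | _, .falsum => .falsum
  | _, .equal t₁ t₂ => .equal (t₁.relabel (Sum.map Sum.inr id)) (t₂.relabel (Sum.map Sum.inr id))
  | _, .rel R ts => .rel R fun i => (ts i).relabel (Sum.map Sum.inr id)
  | _, .imp φ ψ => (relativize θ φ).imp (relativize θ ψ)
  | n, .all φ => (BoundedFormula.imp (BoundedFormula.relabel (n := n + 1) (k := 0)
      (Sum.elim (Sum.inl ∘ Sum.inl) fun _ => Sum.inr (Fin.last n)) θ) (relativize θ φ)).all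

variable {M M' A A' : Type*} [L.Structure M] [L.Structure M'] [L.Structure A] [L.Structure A']

theorem realize_relativize {θ : L.Formula (β ⊕ Unit)} {j : A ↪[L] M} {p : β → M}
    (hj : range j = {x | θ.Realize (Sum.elim p fun _ => x)}) {n : ℕ} (φ : L.BoundedFormula α n)
    (v : α → A) (xs : Fin n → A) :
    (relativize θ φ).Realize (Sum.elim p (j ∘ v)) (j ∘ xs) ↔ φ.Realize v xs := by
  have hterm {n : ℕ} (t : L.Term (α ⊕ Fin n)) (xs : Fin n → A) :
      (t.relabel (Sum.map Sum.inr id : α ⊕ Fin n → (β ⊕ α) ⊕ Fin n)).realize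
        (Sum.elim (Sum.elim p (j ∘ v)) (j ∘ xs)) = j (t.realize (Sum.elim v xs)) := by
    rw [Term.realize_relabel, ← HomClass.realize_term]
    congr 1
    ext (x | x) <;> rfl
  induction φ with
  | falsum => rfl
  | equal t₁ t₂ =>
    simp only [relativize, BoundedFormula.Realize, hterm]
    exact j.injective.eq_iff
  | rel R ts =>
    simp only [relativize, BoundedFormula.Realize, hterm]
    exact j.map_rel R fun i => (ts i).realize (Sum.elim v xs)
  | imp _ _ ih₁ ih₂ => simp only [relativize, BoundedFormula.Realize, ih₁, ih₂]
  | @all n φ ih =>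
    have hθ (a : M) : (BoundedFormula.relabel (n := n + 1) (k := 0)
        (Sum.elim (Sum.inl ∘ Sum.inl) fun _ => Sum.inr (Fin.last n)) θ).Realize
          (Sum.elim p (j ∘ v)) (Fin.snoc (j ∘ xs) a) ↔ a ∈ range j := by
      rw [hj]
      refine BoundedFormula.realize_relabel.trans
        (iff_of_eq (congrArg₂ _ ?_ (Subsingleton.elim _ _)))
      ext (x | x)
      · rfl
      · simp
    simp only [relativize, BoundedFormula.Realize]
    refine (forall_congr' fun a => imp_congr_left (hθ a)).trans ?_
    simp only [forall_mem_range, ← Fin.comp_snoc, ih]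

theorem tp_eq_of_definable {θ : L.Formula (β ⊕ Unit)} {j : A ↪[L] M} {j' : A' ↪[L] M'}
    {p : β → M} {p' : β → M'} (hj : range j = {x | θ.Realize (Sum.elim p fun _ => x)})
    (hj' : range j' = {x | θ.Realize (Sum.elim p' fun _ => x)}) {v : α → A} {v' : α → A'}
    (h : tp L (Sum.elim p (j ∘ v)) = tp L (Sum.elim p' (j' ∘ v'))) : tp L v = tp L v' := by
  ext φ
  rw [mem_tp, mem_tp, Formula.Realize, Formula.Realize, ← realize_relativize hj,
    ← realize_relativize hj', Subsingleton.elim (j ∘ default) default,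
    Subsingleton.elim (j' ∘ default) default]
  exact realize_iff_of_tp_eq h (relativize θ φ)

theorem elementarilyEquivalent_of_definable {θ : L.Formula (β ⊕ Unit)} {j : A ↪[L] M}
    {j' : A' ↪[L] M'} {p : β → M} {p' : β → M'}
    (hj : range j = {x | θ.Realize (Sum.elim p fun _ => x)})
    (hj' : range j' = {x | θ.Realize (Sum.elim p' fun _ => x)}) (h : tp L p = tp L p') :
    A ≅[L] A' := by
  refine elementarilyEquivalent_iff.2 fun φ => Set.ext_iff.1
    (tp_eq_of_definable hj hj' (v := (default : Empty → A)) (v' := (default : Empty → A')) ?_) φ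
  convert tp_comp_eq h (Sum.elim id Empty.elim) using 2 <;> ext (x | x) <;> first | rfl | cases x

end Relativization

theorem finite_range_of_finite_range {X Y Z : Type*} {f : X → Y} {g : X → Z}
    (hg : (range g).Finite) (h : ∀ x y, g x = g y → f x = f y) : (range f).Finite := by
  rcases isEmpty_or_nonempty X with _ | ⟨⟨x₀⟩⟩
  · exact toFinite _
  · refine (hg.image (Function.extend g f fun _ => f x₀)).subset ?_
    rintro _ ⟨x, rfl⟩
    exact ⟨g x, mem_range_self x, Function.FactorsThrough.extend_apply (fun x y => h x y) _ x⟩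

theorem FinTypes.of_definable {L : FirstOrder.Language.{u, v}} {M A β : Type*} [L.Structure M]
    [L.Structure A] [Finite β] (h : FinTypes L M) {θ : L.Formula (β ⊕ Unit)} {j : A ↪[L] M}
    {p : β → M} (hj : range j = {x | θ.Realize (Sum.elim p fun _ => x)}) : FinTypes L A := fun n =>
  finite_range_of_finite_range (g := fun v => tp L (Sum.elim p (j ∘ v)))
    ((h.finite_range_tp (X := β ⊕ Fin n)).subset (range_comp_subset_range _ (tp L)))
    fun _ _ => tp_eq_of_definable hj hj

section Intervals

variable {ι M N : Type} [LinearOrder M] [Colored ι M] [LinearOrder N] [Colored ι N]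

/-- The formula `p 0 ≤ x ≤ p 1`. -/
def iccF : (CLOLang ι).Formula (Fin 2 ⊕ Unit) :=
  ∼(ltF (Sum.inr ()) (Sum.inl 0)) ⊓ ∼(ltF (Sum.inl 1) (Sum.inr ()))

theorem setOf_realize_iccF (a b : M) :
    {x | (iccF : (CLOLang ι).Formula _).Realize (Sum.elim ![a, b] fun _ => x)} = Icc a b := by
  ext x
  simp [iccF]

theorem range_valEmb_icc (a b : M) : range (valEmb (ι := ι) (Icc a b)) =
    {x | (iccF : (CLOLang ι).Formula _).Realize (Sum.elim ![a, b] fun _ => x)} := by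
  rw [range_valEmb, setOf_realize_iccF]

theorem icc_elementarilyEquivalent {a b : M} {a' b' : N}
    (h : tp (CLOLang ι) ![a, b] = tp (CLOLang ι) ![a', b']) : Icc a b ≅[CLOLang ι] Icc a' b' :=
  elementarilyEquivalent_of_definable (range_valEmb_icc a b) (range_valEmb_icc a' b') h

theorem icc_coe_elementarilyEquivalent {s : Set M} (hs : s.OrdConnected) (a b : s) :
    Icc a b ≅[CLOLang ι] Icc (a : M) b := by
  refine elementarilyEquivalent_of_definable (j := (valEmb s).comp (valEmb _)) ?_
    (range_valEmb_icc (a : M) b) rfl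
  rw [setOf_realize_iccF]
  ext x
  exact ⟨fun ⟨y, hy⟩ => hy ▸ y.2, fun hx => ⟨⟨⟨x, hs.out a.2 b.2 hx⟩, hx⟩, rfl⟩⟩

variable (ι N) in
/-- The set of the theories of the closed intervals of `N`, the empty one possibly included. -/
def intervalTheories : Set (CLOLang ι).Theory :=
  range fun p : N × N => (CLOLang ι).completeTheory (Icc p.1 p.2)

theorem intervalTheories_subset_of_elementaryEmbedding (f : M ↪ₑ[CLOLang ι] N) :
    intervalTheories ι M ⊆ intervalTheories ι N := by
  rintro _ ⟨⟨a, b⟩, rfl⟩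
  have hf : ![f a, f b] = f ∘ ![a, b] := List.ofFn_injective rfl
  exact ⟨(f a, f b), icc_elementarilyEquivalent (hf ▸ tp_elementaryEmbedding f ![a, b])⟩

theorem finite_intervalTheories (h : FinTypes (CLOLang ι) N) : (intervalTheories ι N).Finite :=
  finite_range_of_finite_range (g := fun p : N × N => tp (CLOLang ι) ![p.1, p.2])
    ((h 2).subset (range_comp_subset_range (fun p : N × N => ![p.1, p.2]) (tp _)))
    fun _ _ => icc_elementarilyEquivalent

theorem aleph0CatTheory_of_mem_intervalTheories (h : FinTypes (CLOLang ι) N) :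
    ∀ T ∈ intervalTheories ι N, Aleph0CatTheory ι T := by
  rintro _ ⟨⟨a, b⟩, rfl⟩
  exact aleph0CatTheory_of_finTypes (h.of_definable (range_valEmb_icc a b))

variable (ι N) in
theorem exists_countable_elementaryEmbedding [Countable ι] :
    ∃ (K : Type) (_ : LinearOrder K) (_ : Colored ι K),
      Countable K ∧ Nonempty (K ↪ₑ[CLOLang ι] N) := by
  obtain ⟨K, hK, hc, ⟨f⟩⟩ : ∃ (K : Type) (_ : (CLOLang ι).Structure K),
      Countable K ∧ Nonempty (K ↪ₑ[CLOLang ι] N) := by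
    obtain ⟨K, -, hK⟩ := exists_countable_elementarySubstructure (L := CLOLang ι) (M := N)
      countable_empty
    exact ⟨K, _, hK, ⟨K.subtype⟩⟩
  rcases isEmpty_or_nonempty N with _ | _
  · exact ⟨N, _, _, inferInstance, ⟨ElementaryEmbedding.refl _ N⟩⟩
  · obtain ⟨_, _, rfl⟩ := exists_eq_instStructure f.elementarilyEquivalent.symm
    exact ⟨K, _, _, hc, ⟨f⟩⟩

end Intervals

section Exhausting

variable {N N' : Type*} [LinearOrder N] [LinearOrder N']

/-- A monotone sequence indexed by `ℤ` which is cofinal and coinitial, so that `N` is the union of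
its consecutive closed intervals. -/
structure IsExhausting (s : ℤ → N) : Prop where
  monotone : Monotone s
  exists_ge : ∀ x, ∃ k, x ≤ s k
  exists_le : ∀ x, ∃ k, s k ≤ x

theorem IsExhausting.exists_mem_icc {s : ℤ → N} (hs : IsExhausting s) (x : N) :
    ∃ k, x ∈ Icc (s k) (s (k + 1)) := by
  obtain ⟨i, hi⟩ := hs.exists_le x
  obtain ⟨j, hj⟩ := hs.exists_ge x
  by_contra! h
  have hlt : ∀ k ≥ i, s k < x := fun k hk => by
    refine lt_of_le_of_ne ?_ ?_
    · induction k, hk using Int.leInduction with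
      | base => exact hi
      | succ k _ ih => exact le_of_not_ge fun hx => h k ⟨ih, hx⟩
    · rintro rfl
      exact h k ⟨le_rfl, hs.monotone (Int.le_add_one le_rfl)⟩
  exact (hlt (max i j) (le_max_left i j)).not_ge (hj.trans (hs.monotone (le_max_right i j)))

theorem exists_orderIso_of_rel {R : N → N' → Prop} (hl : ∀ x, ∃ y, R x y) (hr : ∀ y, ∃ x, R x y)
    (hR : ∀ {x x' y y'}, R x y → R x' y' → (x ≤ x' ↔ y ≤ y')) :
    ∃ e : N ≃o N', ∀ {x y}, R x y → e x = y := by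
  choose f hf using hl
  choose g hg using hr
  have eq_right {x y y'} (h : R x y) (h' : R x y') : y = y' :=
    ((hR h h').1 le_rfl).antisymm ((hR h' h).1 le_rfl)
  have eq_left {x x' y} (h : R x y) (h' : R x' y) : x = x' :=
    ((hR h h').2 le_rfl).antisymm ((hR h' h).2 le_rfl)
  exact ⟨⟨⟨f, g, fun x => eq_left (hg _) (hf x), fun y => eq_right (hf _) (hg y)⟩,
    fun {x x'} => (hR (hf x) (hf x')).symm⟩, eq_right (hf _)⟩

theorem orderIso_icc_le_left {a b : N} {a' b' : N'} (e : Icc a b ≃o Icc a' b') (h : a' ≤ b')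
    {x : Icc a b} (hx : (x : N) ≤ a) : (e x : N') ≤ a' :=
  e.le_symm_apply.1 <| show x ≤ e.symm ⟨a', le_rfl, h⟩ from hx.trans (e.symm _).2.1

theorem right_le_orderIso_icc {a b : N} {a' b' : N'} (e : Icc a b ≃o Icc a' b') (h : a' ≤ b')
    {x : Icc a b} (hx : b ≤ (x : N)) : b' ≤ (e x : N') :=
  e.symm_apply_le.1 <| show e.symm ⟨b', h, le_rfl⟩ ≤ x from (e.symm _).2.2.trans hx

variable {s : ℤ → N} {s' : ℤ → N'}

theorem le_of_le_of_orderIso_icc (hs : Monotone s) (hs' : Monotone s')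
    (e : ∀ k, Icc (s k) (s (k + 1)) ≃o Icc (s' k) (s' (k + 1))) {i j : ℤ} (hij : i ≤ j)
    (h : s j ≤ s i) : s' j ≤ s' i := by
  induction j, hij using Int.leInduction with
  | base => rfl
  | succ j hij ih =>
    have hj : s j ≤ s (j + 1) := hs (Int.le_add_one le_rfl)
    have hj' : s' j ≤ s' (j + 1) := hs' (Int.le_add_one le_rfl)
    calc s' (j + 1) ≤ e j ⟨s j, le_rfl, hj⟩ := right_le_orderIso_icc _ hj' (h.trans (hs hij))
      _ ≤ s' j := orderIso_icc_le_left _ hj' le_rfl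
      _ ≤ s' i := ih (hj.trans h)

theorem orderIso_icc_le_orderIso_icc (hs : Monotone s) (hs' : Monotone s')
    (e : ∀ k, Icc (s k) (s (k + 1)) ≃o Icc (s' k) (s' (k + 1))) {i j : ℤ}
    {x : Icc (s i) (s (i + 1))} {y : Icc (s j) (s (j + 1))} (hxy : (x : N) ≤ y) :
    (e i x : N') ≤ e j y := by
  have hsucc (k : ℤ) : s' k ≤ s' (k + 1) := hs' (Int.le_add_one le_rfl)
  rcases lt_trichotomy i j with hij | rfl | hij
  · exact (e i x).2.2.trans ((hs' hij).trans (e j y).2.1)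
  · exact (e i).monotone hxy
  · have hji : s (j + 1) ≤ s i := hs hij
    calc (e i x : N') ≤ s' i :=
          orderIso_icc_le_left _ (hsucc i) (hxy.trans (y.2.2.trans hji))
      _ ≤ s' (j + 1) :=
          le_of_le_of_orderIso_icc hs hs' e hij (x.2.1.trans (hxy.trans y.2.2))
      _ ≤ e j y := right_le_orderIso_icc _ (hsucc j) (hji.trans (x.2.1.trans hxy))

theorem IsExhausting.exists_orderIso (hs : IsExhausting s) (hs' : IsExhausting s')
    (e : ∀ k, Icc (s k) (s (k + 1)) ≃o Icc (s' k) (s' (k + 1))) :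
    ∃ E : N ≃o N', ∀ k (x : Icc (s k) (s (k + 1))), E x = e k x := by
  let R (x : N) (y : N') : Prop := ∃ k, ∃ z : Icc (s k) (s (k + 1)), z = x ∧ e k z = y
  have exists_right (x : N) : ∃ y, R x y :=
    (hs.exists_mem_icc x).elim fun k hk => ⟨e k ⟨x, hk⟩, k, ⟨x, hk⟩, rfl, rfl⟩
  have exists_left (y : N') : ∃ x, R x y :=
    (hs'.exists_mem_icc y).elim fun k hk =>
      ⟨(e k).symm ⟨y, hk⟩, k, (e k).symm ⟨y, hk⟩, rfl, by rw [OrderIso.apply_symm_apply]⟩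
  obtain ⟨E, hE⟩ := exists_orderIso_of_rel exists_right exists_left (by
    rintro _ _ _ _ ⟨i, x, rfl, rfl⟩ ⟨j, y, rfl, rfl⟩
    refine ⟨orderIso_icc_le_orderIso_icc hs.monotone hs'.monotone e, fun h => ?_⟩
    simpa using orderIso_icc_le_orderIso_icc hs'.monotone hs.monotone (fun k => (e k).symm) h)
  exact ⟨E, fun k x => hE ⟨k, x, rfl, rfl⟩⟩

/-- The `ℤ`-sequence `…, l 2, l 1, r 0, r 1, r 2, …`. -/
def intSeq {α : Type*} (l r : ℕ → α) : ℤ → α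
  | Int.ofNat k => r k
  | Int.negSucc k => l (k + 1)

theorem intSeq_neg_natCast {α : Type*} {l r : ℕ → α} (h : l 0 = r 0) :
    ∀ k : ℕ, intSeq l r (-k) = l k
  | 0 => h.symm
  | _ + 1 => rfl

theorem isExhausting_intSeq {l r : ℕ → N} (h : l 0 = r 0) (hl : Antitone l) (hr : Monotone r)
    (hl' : ∀ x, ∃ k, l k ≤ x) (hr' : ∀ x, ∃ k, x ≤ r k) : IsExhausting (intSeq l r) where
  monotone := monotone_int_of_le_succ fun
    | Int.ofNat k => hr k.le_succ
    | Int.negSucc 0 => (hl zero_le_one).trans h.le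
    | Int.negSucc (k + 1) => hl (k + 1).le_succ
  exists_ge x := (hr' x).imp' Nat.cast fun _ => id
  exists_le x := (hl' x).imp' (fun k : ℕ => -(k : ℤ)) fun k hk =>
    (intSeq_neg_natCast h k).trans_le hk

theorem exists_cofinal_seq {F : Type*} [Countable N] [Finite F] (f : N → N → F) (a : N) :
    ∃ s : ℕ → N, s 0 = a ∧ Monotone s ∧ (∀ x, ∃ k, x ≤ s k) ∧
      ∀ k ≥ 1, f (s k) (s (k + 1)) = f (s 1) (s 2) := by
  have : Nonempty N := ⟨a⟩
  obtain ⟨U, hU⟩ := Ultrafilter.exists_le (Filter.atTop : Filter N)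
  have exists_eventually_eq (g : N → F) : ∃ i, ∀ᶠ x in U, g x = i := by
    obtain ⟨i, hi⟩ := Ultrafilter.eq_pure_of_finite (U.map g)
    exact ⟨i, show {i} ∈ U.map g from hi ▸ mem_singleton i⟩
  choose c hc using fun b => exists_eventually_eq (f b)
  obtain ⟨i, hi⟩ := exists_eventually_eq c
  obtain ⟨e, he⟩ := exists_surjective_nat N
  have exists_next (b : N) (k : ℕ) : ∃ y, b ≤ y ∧ e k ≤ y ∧ c y = i ∧ f b y = c b :=
    (((Filter.eventually_ge_atTop b).filter_mono hU).and <|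
      ((Filter.eventually_ge_atTop (e k)).filter_mono hU).and <| hi.and (hc b)).exists
  choose next le_next e_le_next c_next f_next using exists_next
  let s : ℕ → N := fun k => Nat.rec a (fun k b => next b k) k
  have f_eq : ∀ k ≥ 1, f (s k) (s (k + 1)) = i := by
    rintro (_ | k) hk
    · exact absurd hk (by decide)
    · exact (f_next (s (k + 1)) (k + 1)).trans (c_next (s k) k)
  refine ⟨s, rfl, monotone_nat_of_le_succ fun k => le_next (s k) k, fun x => ?_, fun k hk => ?_⟩
  · obtain ⟨k, rfl⟩ := he x
    exact ⟨k + 1, e_le_next (s k) k⟩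
  · exact (f_eq k hk).trans (f_eq 1 le_rfl).symm

theorem exists_coinitial_seq {F : Type*} [Countable N] [Finite F] (f : N → N → F) (a : N) :
    ∃ s : ℕ → N, s 0 = a ∧ Antitone s ∧ (∀ x, ∃ k, s k ≤ x) ∧
      ∀ k ≥ 1, f (s (k + 1)) (s k) = f (s 2) (s 1) :=
  have : Countable Nᵒᵈ := ‹Countable N›
  exists_cofinal_seq (N := Nᵒᵈ) (fun x y => f y.ofDual x.ofDual) (OrderDual.toDual a)

theorem exists_cofinal_seq_extending {F : Type*} [Countable N] [Finite F] (f : N → N → F) {n : ℕ}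
    {a : Fin (n + 1) → N} (ha : Monotone a) :
    ∃ s : ℕ → N, (∀ i : Fin (n + 1), s i = a i) ∧ Monotone s ∧ (∀ x, ∃ k, x ≤ s k) ∧
      ∀ k ≥ n + 1, f (s k) (s (k + 1)) = f (s (n + 1)) (s (n + 2)) := by
  obtain ⟨r, hr₀, hr, hr', hrf⟩ := exists_cofinal_seq f (a (Fin.last n))
  let s : ℕ → N := fun k => if h : k < n + 1 then a ⟨k, h⟩ else r (k - n)
  have s_lt {k} (h : k < n + 1) : s k = a ⟨k, h⟩ := dif_pos h
  have s_add : ∀ d, s (n + d) = r d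
    | 0 => (s_lt n.lt_succ_self).trans hr₀.symm
    | d + 1 => (dif_neg (by omega)).trans (by rw [Nat.add_sub_cancel_left])
  refine ⟨s, fun i => s_lt i.2, monotone_nat_of_le_succ fun k => ?_, fun x => ?_, fun k hk => ?_⟩
  · rcases lt_or_ge k n with h | h
    · rw [s_lt (h.trans n.lt_succ_self), s_lt (Nat.succ_lt_succ h)]
      exact ha (Fin.mk_le_mk.2 k.le_succ)
    · obtain ⟨d, rfl⟩ := Nat.exists_eq_add_of_le h
      rw [add_assoc, s_add, s_add]
      exact hr d.le_succ
  · obtain ⟨k, hk⟩ := hr' x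
    exact ⟨n + k, (s_add k).symm ▸ hk⟩
  · obtain ⟨d, rfl⟩ := Nat.exists_eq_add_of_le (n.le_succ.trans hk)
    rw [add_assoc, s_add, s_add, s_add, s_add]
    exact hrf d (by omega)

theorem exists_isExhausting_extending {F : Type*} [Countable N] [Finite F] (f : N → N → F) {n : ℕ}
    {a : Fin (n + 1) → N} (ha : Monotone a) :
    ∃ s : ℤ → N, IsExhausting s ∧ (∀ i : Fin (n + 1), s (i : ℕ) = a i) ∧
      (∀ k ≥ (n + 1 : ℤ), f (s k) (s (k + 1)) = f (s (n + 1)) (s (n + 1 + 1))) ∧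
      ∀ k ≤ (-2 : ℤ), f (s k) (s (k + 1)) = f (s (-2)) (s (-2 + 1)) := by
  obtain ⟨r, hra, hr, hr', hrf⟩ := exists_cofinal_seq_extending f ha
  obtain ⟨l, hl₀, hl, hl', hlf⟩ := exists_coinitial_seq f (a 0)
  have hlr : l 0 = r 0 := hl₀.trans (hra 0).symm
  refine ⟨intSeq l r, isExhausting_intSeq hlr hl hr hl' hr', hra, fun k hk => ?_, fun k hk => ?_⟩
  · obtain ⟨k, rfl⟩ := Int.eq_ofNat_of_zero_le (by omega : 0 ≤ k)
    exact hrf k (by omega)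
  · obtain ⟨k, rfl⟩ : ∃ d : ℕ, k = -((d + 1 : ℕ) : ℤ) := ⟨(-k - 1).toNat, by omega⟩
    rw [neg_add_eq_sub, ← neg_sub, Nat.cast_succ, add_sub_cancel_right, ← Nat.cast_succ,
      intSeq_neg_natCast hlr, intSeq_neg_natCast hlr]
    exact hlf k (by omega)

end Exhausting

section Codes

variable {ι N N' : Type} [LinearOrder N] [LinearOrder N'] [Colored ι N] [Colored ι N']

theorem IsExhausting.exists_equiv {s : ℤ → N} {s' : ℤ → N'} (hs : IsExhausting s)
    (hs' : IsExhausting s')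
    (h : ∀ k, Nonempty (Icc (s k) (s (k + 1)) ≃[CLOLang ι] Icc (s' k) (s' (k + 1)))) :
    ∃ E : N ≃[CLOLang ι] N', ∀ k, E (s k) = s' k := by
  let e k := (h k).some
  let o k : Icc (s k) (s (k + 1)) ≃o Icc (s' k) (s' (k + 1)) :=
    ⟨(e k).toEquiv, equiv_le_iff (e k)⟩
  obtain ⟨E, hE⟩ := hs.exists_orderIso hs' o
  refine ⟨equivOfOrderIso E fun i x => ?_, fun k => ?_⟩
  · obtain ⟨k, hk⟩ := hs.exists_mem_icc x
    rw [hE k ⟨x, hk⟩]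
    exact equiv_mem_color_iff (e k)
  · have hk : s k ≤ s (k + 1) := hs.monotone (Int.le_add_one le_rfl)
    have hk' : s' k ≤ s' (k + 1) := hs'.monotone (Int.le_add_one le_rfl)
    refine (hE k ⟨s k, le_rfl, hk⟩).trans (le_antisymm ?_ (o k _).2.1)
    exact orderIso_icc_le_left (o k) hk' le_rfl

theorem neg_two_le_add_one (n : ℕ) : (-2 : ℤ) ≤ n + 1 := by omega

/-- `c` is a code of the tuple `a` in `N`: it lists the theories of the consecutive intervals of an
exhausting sequence through `a`, which outside the window `[-2, n + 1]` are constant. -/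
def HasCode (𝓛 : Set (CLOLang ι).Theory) {n : ℕ} (a : Fin (n + 1) → N)
    (c : Icc (-2 : ℤ) (n + 1) → 𝓛) : Prop :=
  ∃ s : ℤ → N, IsExhausting s ∧ (∀ i : Fin (n + 1), s (i : ℕ) = a i) ∧
    ∀ k, (CLOLang ι).completeTheory (Icc (s k) (s (k + 1))) =
      c (projIcc _ _ (neg_two_le_add_one n) k)

variable {𝓛 : Set (CLOLang ι).Theory}

theorem exists_hasCode (h𝓛 : 𝓛.Finite) [Countable N] (hN : intervalTheories ι N ⊆ 𝓛) {n : ℕ}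
    {a : Fin (n + 1) → N} (ha : Monotone a) : ∃ c, HasCode 𝓛 a c := by
  have := h𝓛.to_subtype
  let f (x y : N) : 𝓛 := ⟨_, hN ⟨(x, y), rfl⟩⟩
  obtain ⟨s, hs, hsa, hright, hleft⟩ := exists_isExhausting_extending f ha
  refine ⟨fun k => f (s k) (s (k + 1)), s, hs, hsa, fun k => congrArg Subtype.val (?_ : f _ _ = _)⟩
  rcases le_total k (-2) with hk | hk
  · rw [projIcc_of_le_left _ hk, hleft k hk]
  rcases le_total (n + 1 : ℤ) k with hk' | hk'
  · rw [projIcc_of_right_le _ hk', hright k hk']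
  · rw [projIcc_of_mem _ ⟨hk, hk'⟩]

theorem HasCode.exists_equiv (hcat : ∀ T ∈ 𝓛, Aleph0CatTheory ι T) [Countable N] [Countable N']
    {n : ℕ} {a : Fin (n + 1) → N} {a' : Fin (n + 1) → N'} {c : Icc (-2 : ℤ) (n + 1) → 𝓛}
    (h : HasCode 𝓛 a c) (h' : HasCode 𝓛 a' c) : ∃ E : N ≃[CLOLang ι] N', E ∘ a = a' := by
  obtain ⟨s, hs, hsa, hsc⟩ := h
  obtain ⟨s', hs', hsa', hsc'⟩ := h'
  obtain ⟨E, hE⟩ := hs.exists_equiv hs' fun k =>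
    hcat _ (c _).2 _ _ _ _ _ _ inferInstance inferInstance (hsc k) (hsc' k)
  exact ⟨E, funext fun i => by rw [Function.comp_apply, ← hsa, hE, hsa']⟩

theorem finTypes_of_intervalTheories_subset (h𝓛 : 𝓛.Finite)
    (hcat : ∀ T ∈ 𝓛, Aleph0CatTheory ι T) [Countable N] (hN : intervalTheories ι N ⊆ 𝓛) :
    FinTypes (CLOLang ι) N := by
  have := h𝓛.to_subtype
  rintro (_ | n)
  · exact toFinite _
  choose c hc using fun a : Fin (n + 1) → N => exists_hasCode h𝓛 hN (Tuple.monotone_sort a)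
  refine finite_range_of_finite_range (g := fun a => (Tuple.sort a, c a)) (toFinite _)
    fun a a' h => ?_
  obtain ⟨hsort, hcode⟩ := Prod.mk.inj h
  obtain ⟨E, hE⟩ := (hc a).exists_equiv hcat (hcode ▸ hc a')
  have hEa : E ∘ a = a' := (Tuple.sort a).surjective.injective_comp_right
    (hE.trans (congrArg (fun σ : Equiv.Perm (Fin (n + 1)) => a' ∘ σ) hsort.symm))
  rw [← hEa, tp_equiv]

theorem subsingleton_setOf_completeTheory_of_hasCode (hcat : ∀ T ∈ 𝓛, Aleph0CatTheory ι T)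
    {n : ℕ} (c : Icc (-2 : ℤ) (n + 1) → 𝓛) :
    {T | ∃ (N : Type) (_ : LinearOrder N) (_ : Colored ι N), Countable N ∧
      (∃ a : Fin (n + 1) → N, HasCode 𝓛 a c) ∧
      T = (CLOLang ι).completeTheory N}.Subsingleton := by
  rintro _ ⟨N, _, _, _, ⟨a, ha⟩, rfl⟩ _ ⟨N', _, _, _, ⟨a', ha'⟩, rfl⟩
  obtain ⟨E, -⟩ := ha.exists_equiv hcat ha'
  exact E.toElementaryEmbedding.elementarilyEquivalent

variable [Countable ι]

theorem aleph0CatTheory_of_intervalTheories_subset (h𝓛 : 𝓛.Finite)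
    (hcat : ∀ T ∈ 𝓛, Aleph0CatTheory ι T) (hN : intervalTheories ι N ⊆ 𝓛) :
    Aleph0CatTheory ι ((CLOLang ι).completeTheory N) := by
  obtain ⟨K, _, _, _, ⟨f⟩⟩ := exists_countable_elementaryEmbedding ι N
  rw [← show _ = _ from f.elementarilyEquivalent]
  exact aleph0CatTheory_of_finTypes <| finTypes_of_intervalTheories_subset h𝓛 hcat <|
    (intervalTheories_subset_of_elementaryEmbedding f).trans hN

theorem finite_setOf_completeTheory (h𝓛 : 𝓛.Finite) (hcat : ∀ T ∈ 𝓛, Aleph0CatTheory ι T) :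
    {T | ∃ (N : Type) (_ : LinearOrder N) (_ : Colored ι N), intervalTheories ι N ⊆ 𝓛 ∧
      T = (CLOLang ι).completeTheory N}.Finite := by
  have := h𝓛.to_subtype
  let : Colored ι Empty := ⟨fun _ => ∅⟩
  refine ((finite_iUnion fun c : Icc (-2 : ℤ) ((0 : ℕ) + 1) → 𝓛 =>
    (subsingleton_setOf_completeTheory_of_hasCode hcat c).finite).insert
      ((CLOLang ι).completeTheory Empty)).subset ?_
  rintro _ ⟨N, _, _, hN, rfl⟩
  obtain ⟨K, _, _, _, ⟨f⟩⟩ := exists_countable_elementaryEmbedding ι N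
  rw [← show _ = _ from f.elementarilyEquivalent]
  rcases isEmpty_or_nonempty K with _ | ⟨⟨x⟩⟩
  · let e : K ≃[CLOLang ι] Empty := equivOfOrderIso (.ofIsEmpty K Empty) fun _ => isEmptyElim
    exact .inl e.toElementaryEmbedding.elementarilyEquivalent
  · obtain ⟨c, hc⟩ := exists_hasCode h𝓛
      ((intervalTheories_subset_of_elementaryEmbedding f).trans hN)
      (monotone_const : Monotone fun _ : Fin 1 => x)
    exact .inr (mem_iUnion.2 ⟨c, K, _, _, inferInstance, ⟨_, hc⟩, rfl⟩)

end Codes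

section ConvexFormulas

variable {ι M₀ A : Type} [LinearOrder M₀] [Colored ι M₀] [LinearOrder A] [Colored ι A]
  {φ ψ : (CLOLang ι).Formula Unit} {Φ Ψ : Set ((CLOLang ι).Formula Unit)}

theorem fmlSet_inf : FmlSet ι A Colored.color (φ ⊓ ψ) =
    FmlSet ι A Colored.color φ ∩ FmlSet ι A Colored.color ψ :=
  ext fun _ => Formula.realize_inf

theorem fmlSet_not : FmlSet ι A Colored.color φ.not = (FmlSet ι A Colored.color φ)ᶜ :=
  ext fun _ => Formula.realize_not

/-- The formula defining the upper closure of the set defined by `φ`. -/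
noncomputable def upperF (φ : (CLOLang ι).Formula Unit) : (CLOLang ι).Formula Unit :=
  exsLeft (φ.relabel Sum.inl ⊓ (ltF (Sum.inr ()) (Sum.inl ())).not)

/-- The formula defining the lower closure of the set defined by `φ`. -/
noncomputable def lowerF (φ : (CLOLang ι).Formula Unit) : (CLOLang ι).Formula Unit :=
  exsLeft (φ.relabel Sum.inl ⊓ (ltF (Sum.inl ()) (Sum.inr ())).not)

theorem fmlSet_upperF : FmlSet ι A Colored.color (upperF φ) =
    upperClosure (FmlSet ι A Colored.color φ) := by
  ext x
  have : Nonempty A := ⟨x⟩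
  refine realize_exsLeft.trans ((Equiv.funUnique Unit A).exists_congr fun y => ?_)
  simp only [Formula.realize_inf, Formula.realize_relabel, Formula.realize_not, realize_ltF,
    Sum.elim_inl, Sum.elim_inr, Sum.elim_comp_inl, not_lt]
  rfl

theorem fmlSet_lowerF : FmlSet ι A Colored.color (lowerF φ) =
    lowerClosure (FmlSet ι A Colored.color φ) := by
  ext x
  have : Nonempty A := ⟨x⟩
  refine realize_exsLeft.trans ((Equiv.funUnique Unit A).exists_congr fun y => ?_)
  simp only [Formula.realize_inf, Formula.realize_relabel, Formula.realize_not, realize_ltF,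
    Sum.elim_inl, Sum.elim_inr, Sum.elim_comp_inl, not_lt]
  rfl

/-- The formula defining the convex hull of the set defined by `φ`. -/
noncomputable def hullF (φ : (CLOLang ι).Formula Unit) : (CLOLang ι).Formula Unit :=
  upperF φ ⊓ lowerF φ

theorem fmlSet_hullF : FmlSet ι A Colored.color (hullF φ) =
    (upperClosure (FmlSet ι A Colored.color φ) : Set A) ∩
      lowerClosure (FmlSet ι A Colored.color φ) := by
  rw [hullF, fmlSet_inf, fmlSet_upperF, fmlSet_lowerF]

theorem fmlSet_subset_hullF :
    FmlSet ι A Colored.color φ ⊆ FmlSet ι A Colored.color (hullF φ) := by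
  rw [fmlSet_hullF]
  exact subset_inter subset_upperClosure subset_lowerClosure

theorem fmlSet_hullF_subset {s : Set A} (hs : s.OrdConnected)
    (h : FmlSet ι A Colored.color φ ⊆ s) : FmlSet ι A Colored.color (hullF φ) ⊆ s := by
  rw [fmlSet_hullF]
  rintro x ⟨⟨a, ha, hax⟩, b, hb, hxb⟩
  exact hs.out (h ha) (h hb) ⟨hax, hxb⟩

theorem fmlSet_subset_of_elementarilyEquivalent {B : Type} [LinearOrder B] [Colored ι B]
    (hAB : A ≅[CLOLang ι] B) (h : FmlSet ι A Colored.color φ ⊆ FmlSet ι A Colored.color ψ) :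
    FmlSet ι B Colored.color φ ⊆ FmlSet ι B Colored.color ψ := fun b hb =>
  have : Nonempty B := ⟨b⟩
  Formula.realize_imp.1 (forall_realize_of_elementarilyEquivalent (φ := φ.imp ψ) hAB
    (fun x => Formula.realize_imp.2 fun hx => h (a := x ()) hx) fun _ => b) hb

theorem convexFml_of_forall (h : ∀ (B : Type) [LinearOrder B] [Colored ι B],
    (FmlSet ι B Colored.color φ).OrdConnected) : ConvexFml ι M₀ Colored.color φ :=
  fun B _ cB _ => @h B _ ⟨cB⟩

variable (M₀ φ) in
theorem convexFml_hullF : ConvexFml ι M₀ Colored.color (hullF φ) :=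
  convexFml_of_forall fun _ _ _ => by
    rw [fmlSet_hullF]
    exact (UpperSet.upper _).ordConnected.inter (LowerSet.lower _).ordConnected

variable (M₀ φ) in
theorem convexFml_not_upperF : ConvexFml ι M₀ Colored.color (upperF φ).not :=
  convexFml_of_forall fun _ _ _ => by
    rw [fmlSet_not, fmlSet_upperF]
    exact (UpperSet.upper _).compl.ordConnected

variable (M₀ φ) in
theorem convexFml_not_lowerF : ConvexFml ι M₀ Colored.color (lowerF φ).not :=
  convexFml_of_forall fun _ _ _ => by
    rw [fmlSet_not, fmlSet_lowerF]
    exact (LowerSet.lower _).compl.ordConnected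

end ConvexFormulas

section ConvexTypes

variable {ι M₀ A B : Type} [LinearOrder M₀] [Colored ι M₀] [LinearOrder A] [Colored ι A]
  [LinearOrder B] [Colored ι B] {φ : (CLOLang ι).Formula Unit}
  {Φ Ψ : Set ((CLOLang ι).Formula Unit)}

theorem ordConnected_typeSet (hΦ : IsConvexType ι M₀ Colored.color Φ) (hA : A ≅[CLOLang ι] M₀) :
    (TypeSet ι A Colored.color Φ).OrdConnected :=
  ⟨fun _ hx _ hy _ hz φ hφ => (hΦ.1 φ hφ A _ Colored.color hA).out (hx φ hφ) (hy φ hφ) hz⟩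

theorem mem_typeSet_of_tp_eq {a : A} {b : B}
    (h : tp (CLOLang ι) (fun _ : Unit => a) = tp (CLOLang ι) fun _ : Unit => b)
    (ha : a ∈ TypeSet ι A Colored.color Φ) : b ∈ TypeSet ι B Colored.color Φ := fun φ hφ =>
  (realize_iff_of_tp_eq h φ).1 (ha φ hφ)

theorem mem_of_mem_typeSet (hΦ : IsConvexType ι M₀ Colored.color Φ) (hA : A ≅[CLOLang ι] M₀)
    {a : A} (ha : a ∈ TypeSet ι A Colored.color Φ) (hφ : ConvexFml ι M₀ Colored.color φ)
    (haφ : a ∈ FmlSet ι A Colored.color φ) : φ ∈ Φ :=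
  hΦ.2.2 φ hφ ⟨A, _, Colored.color, hA, a, forall_mem_insert.2 ⟨haφ, ha⟩⟩

theorem eq_of_mem_typeSet (hΦ : IsConvexType ι M₀ Colored.color Φ)
    (hΨ : IsConvexType ι M₀ Colored.color Ψ) (hA : A ≅[CLOLang ι] M₀) {a : A}
    (haΦ : a ∈ TypeSet ι A Colored.color Φ) (haΨ : a ∈ TypeSet ι A Colored.color Ψ) : Φ = Ψ :=
  Subset.antisymm (fun φ hφ => mem_of_mem_typeSet hΨ hA haΨ (hΦ.1 φ hφ) (haΦ φ hφ))
    fun φ hφ => mem_of_mem_typeSet hΦ hA haΦ (hΨ.1 φ hφ) (haΨ φ hφ)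

theorem isConvexType_setOf_mem (hA : A ≅[CLOLang ι] M₀) (a : A) :
    IsConvexType ι M₀ Colored.color
      {φ | ConvexFml ι M₀ Colored.color φ ∧ a ∈ FmlSet ι A Colored.color φ} := by
  refine ⟨fun φ hφ => hφ.1, ⟨A, _, Colored.color, hA, a, fun φ hφ => hφ.2⟩,
    fun φ hφ ⟨B, _, cB, _, b, hb⟩ => ⟨hφ, ?_⟩⟩
  let : Colored ι B := ⟨cB⟩
  obtain ⟨hbφ, hb⟩ := forall_mem_insert.1 hb
  have hbφ : b ∈ FmlSet ι B Colored.color φ := hbφ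
  rw [← OrdConnected.upperClosure_inter_lowerClosure (hφ A _ Colored.color hA),
    ← fmlSet_upperF, ← fmlSet_lowerF]
  -- The complements of the two closures are convex, so `a` outside one of them would put `b`
  -- outside it as well.
  refine ⟨by_contra fun ha => ?_, by_contra fun ha => ?_⟩
  · have hb' : b ∈ FmlSet ι B Colored.color (upperF φ).not :=
      hb _ ⟨convexFml_not_upperF M₀ φ, by rwa [fmlSet_not]⟩
    rw [fmlSet_not, fmlSet_upperF] at hb'
    exact hb' (subset_upperClosure hbφ)
  · have hb' : b ∈ FmlSet ι B Colored.color (lowerF φ).not :=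
      hb _ ⟨convexFml_not_lowerF M₀ φ, by rwa [fmlSet_not]⟩
    rw [fmlSet_not, fmlSet_lowerF] at hb'
    exact hb' (subset_lowerClosure hbφ)

theorem exists_typeSet_eq_fmlSet_of_isolatedCT (h : IsolatedCT ι M₀ Colored.color Φ) :
    ∃ φ, ∀ (A : Type) [LinearOrder A] [Colored ι A], (A ≅[CLOLang ι] M₀) →
      TypeSet ι A Colored.color Φ = FmlSet ι A Colored.color φ := by
  obtain ⟨φ, hφ, hc, huniq⟩ := h
  refine ⟨φ, fun A _ _ hA => Subset.antisymm (fun a ha => ha φ hφ) fun a ha => ?_⟩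
  rw [← huniq _ (isConvexType_setOf_mem hA a) ⟨hc, ha⟩]
  exact fun ψ hψ => hψ.2

theorem typeSet_elementarilyEquivalent_of_isolatedCT (h : IsolatedCT ι M₀ Colored.color Φ)
    (hA : A ≅[CLOLang ι] M₀) (hB : B ≅[CLOLang ι] M₀) :
    TypeSet ι A Colored.color Φ ≅[CLOLang ι] TypeSet ι B Colored.color Φ := by
  obtain ⟨φ, hφ⟩ := exists_typeSet_eq_fmlSet_of_isolatedCT h
  have hrange (C : Type) [LinearOrder C] [Colored ι C] (hC : C ≅[CLOLang ι] M₀) :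
      range (valEmb (ι := ι) (TypeSet ι C Colored.color Φ)) = {x | (φ.relabel Sum.inr :
        (CLOLang ι).Formula (Empty ⊕ Unit)).Realize (Sum.elim Empty.elim fun _ => x)} := by
    simp only [range_valEmb, hφ C hC, Formula.realize_relabel, Sum.elim_comp_inr]
    rfl
  exact elementarilyEquivalent_of_definable (hrange A hA) (hrange B hB)
    (tp_eq_of_isEmpty (ElementarilyEquivalent.trans hA hB.symm) _ _)

theorem isolatedCT_of_fmlSet_subset (hΦ : IsConvexType ι M₀ Colored.color Φ)
    (hne : (FmlSet ι M₀ Colored.color φ).Nonempty)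
    (hsub : FmlSet ι M₀ Colored.color φ ⊆ TypeSet ι M₀ Colored.color Φ) :
    IsolatedCT ι M₀ Colored.color Φ := by
  have hull_subset (B : Type) [LinearOrder B] [Colored ι B] (hB : B ≅[CLOLang ι] M₀) :
      FmlSet ι B Colored.color (hullF φ) ⊆ TypeSet ι B Colored.color Φ :=
    fmlSet_hullF_subset (ordConnected_typeSet hΦ hB) fun b hb ψ hψ =>
      fmlSet_subset_of_elementarilyEquivalent hB.symm (fun a ha => hsub ha ψ hψ) hb
  have hrefl : M₀ ≅[CLOLang ι] M₀ := Eq.refl ((CLOLang ι).completeTheory M₀)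
  obtain ⟨a, ha⟩ := hne
  refine ⟨hullF φ, mem_of_mem_typeSet hΦ hrefl (hsub ha) (convexFml_hullF M₀ φ)
    (fmlSet_subset_hullF ha), convexFml_hullF M₀ φ, fun Ψ hΨ hφΨ => ?_⟩
  obtain ⟨B, _, cB, hB, b, hb⟩ := hΨ.2.1
  let : Colored ι B := ⟨cB⟩
  exact eq_of_mem_typeSet hΨ hΦ hB hb (hull_subset B hB (hb _ hφΨ))

theorem exists_typeSet_eq_empty [Countable ι] [Nonempty M₀]
    (hΦ : IsConvexType ι M₀ Colored.color Φ) (h : ¬ IsolatedCT ι M₀ Colored.color Φ) :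
    ∃ (A : Type) (_ : LinearOrder A) (_ : Colored ι A), (A ≅[CLOLang ι] M₀) ∧
      TypeSet ι A Colored.color Φ = ∅ := by
  obtain ⟨A, _, -, hA, hAΦ⟩ := exists_countable_omitting (M := M₀) (p := Φ) fun θ ⟨x, hx⟩ => by
    by_contra! hθ
    exact h (isolatedCT_of_fmlSet_subset hΦ (φ := θ) ⟨x (), hx⟩ fun y hy φ hφ => hθ φ hφ _ hy)
  obtain ⟨_, _, rfl⟩ := exists_eq_instStructure hA
  refine ⟨A, _, _, hA.symm, eq_empty_iff_forall_notMem.2 fun a ha => ?_⟩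
  obtain ⟨φ, hφ, hna⟩ := hAΦ fun _ => a
  exact hna (ha φ hφ)

theorem nonempty_of_isConvexType (hΦ : IsConvexType ι M₀ Colored.color Φ) : Nonempty M₀ := by
  obtain ⟨B, _, cB, hB, b, -⟩ := hΦ.2.1
  let : Colored ι B := ⟨cB⟩
  have : Nonempty B := ⟨b⟩
  exact ElementarilyEquivalent.nonempty (L := CLOLang ι) (M := B) hB

theorem exists_theoriesAt_eq_singleton_iff [Countable ι]
    (hΦ : IsConvexType ι M₀ Colored.color Φ) :
    (∃ T, TheoriesAt ι M₀ Colored.color Φ = {T}) ↔ IsolatedCT ι M₀ Colored.color Φ := by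
  have := nonempty_of_isConvexType hΦ
  refine ⟨fun ⟨T, hT⟩ => by_contra fun h => ?_, fun h => ⟨_, eq_singleton_iff_unique_mem.2
    ⟨⟨M₀, _, Colored.color, Eq.refl ((CLOLang ι).completeTheory M₀), rfl⟩, ?_⟩⟩⟩
  · obtain ⟨B, _, cB, hB, b, hb⟩ := hΦ.2.1
    let : Colored ι B := ⟨cB⟩
    obtain ⟨A, _, _, hA, hempty⟩ := exists_typeSet_eq_empty hΦ h
    have hAB : TypeSet ι B Colored.color Φ ≅[CLOLang ι] TypeSet ι A Colored.color Φ :=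
      (hT.subset ⟨B, _, Colored.color, hB, rfl⟩).trans
        (hT.subset ⟨A, _, Colored.color, hA, rfl⟩).symm
    have : Nonempty (TypeSet ι B Colored.color Φ) := ⟨⟨b, hb⟩⟩
    exact (nonempty_coe_sort.1 hAB.nonempty).ne_empty hempty
  · rintro _ ⟨A, _, cA, hA, rfl⟩
    let : Colored ι A := ⟨cA⟩
    exact typeSet_elementarilyEquivalent_of_isolatedCT h hA rfl

end ConvexTypes

section LocallySimple

variable {ι M₀ S A : Type} [LinearOrder M₀] [Colored ι M₀] [LinearOrder S] [Colored ι S]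
  [LinearOrder A] [Colored ι A] {Φ : Set ((CLOLang ι).Formula Unit)}

theorem IsSaturatedHomogeneous.suffSaturated (hS : IsSaturatedHomogeneous (CLOLang ι) S) :
    SuffSaturated ι S Colored.color := by
  refine ⟨fun m a p hp => ?_, fun m a b hab => ?_⟩
  · obtain ⟨y, hy⟩ := hS.exists_realize (Y := Unit) a p fun q hq =>
      (hp q hq).imp' (fun x _ => x) fun _ => id
    exact ⟨y (), fun φ hφ => hy hφ⟩
  · obtain ⟨e, he⟩ := hS.exists_equiv a b (ext hab)
    exact ⟨e.toEquiv, fun _ _ => (equiv_lt_iff e).symm, fun _ _ => (equiv_mem_color_iff e).symm, he⟩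

variable (ι M₀) in
theorem exists_isSaturatedHomogeneous_colored [Nonempty M₀] :
    ∃ (S : Type) (_ : LinearOrder S) (_ : Colored ι S),
      (S ≅[CLOLang ι] M₀) ∧ IsSaturatedHomogeneous (CLOLang ι) S := by
  obtain ⟨S, _, h, hS⟩ := exists_isSaturatedHomogeneous (CLOLang ι) M₀
  obtain ⟨_, _, rfl⟩ := exists_eq_instStructure h
  exact ⟨S, _, _, h.symm, hS⟩

theorem IsSaturatedHomogeneous.typeSet_nonempty (hS : IsSaturatedHomogeneous (CLOLang ι) S)
    (hSM : S ≅[CLOLang ι] M₀) (hΦ : TypeConsistent ι M₀ Colored.color Φ) :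
    (TypeSet ι S Colored.color Φ).Nonempty := by
  obtain ⟨B, _, cB, hB, b, hb⟩ := hΦ
  let : Colored ι B := ⟨cB⟩
  have : Nonempty B := ⟨b⟩
  have hBS : B ≅[CLOLang ι] S := ElementarilyEquivalent.trans hB hSM.symm
  obtain ⟨y, hy⟩ := hS.exists_tp_eq hBS fun _ : Unit => b
  exact ⟨y (), mem_typeSet_of_tp_eq hy hb⟩

theorem IsSaturatedHomogeneous.intervalTheories_typeSet_subset
    (hS : IsSaturatedHomogeneous (CLOLang ι) S) (hSM : S ≅[CLOLang ι] M₀)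
    (hΦ : IsConvexType ι M₀ Colored.color Φ) (hA : A ≅[CLOLang ι] M₀) :
    intervalTheories ι (TypeSet ι A Colored.color Φ) ⊆
      intervalTheories ι (TypeSet ι S Colored.color Φ) := by
  rintro _ ⟨⟨a, b⟩, rfl⟩
  have : Nonempty A := ⟨a⟩
  have hAS : A ≅[CLOLang ι] S := ElementarilyEquivalent.trans hA hSM.symm
  obtain ⟨y, hy⟩ := hS.exists_tp_eq hAS ![(a : A), b]
  have ha' : y 0 ∈ TypeSet ι S Colored.color Φ :=
    mem_typeSet_of_tp_eq (tp_comp_eq hy fun _ => 0) a.2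
  have hb' : y 1 ∈ TypeSet ι S Colored.color Φ :=
    mem_typeSet_of_tp_eq (tp_comp_eq hy fun _ => 1) b.2
  have hab : Icc (a : A) b ≅[CLOLang ι] Icc (y 0) (y 1) :=
    icc_elementarilyEquivalent (hy.trans (congrArg _ (List.ofFn_injective rfl)))
  refine ⟨(⟨y 0, ha'⟩, ⟨y 1, hb'⟩), Eq.symm ?_⟩
  exact ((icc_coe_elementarilyEquivalent (ordConnected_typeSet hΦ hA) a b).trans hab).trans
    (icc_coe_elementarilyEquivalent (ordConnected_typeSet hΦ hSM) ⟨y 0, ha'⟩ ⟨y 1, hb'⟩).symm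

theorem exists_finite_intervalTheories_typeSet_subset [Countable ι]
    (hΦ : IsConvexType ι M₀ Colored.color Φ)
    (hcat : ∀ (S : Type) [LinearOrder S], ∀ cS : ι → Set S, CLOEquiv ι S cS M₀ Colored.color →
      SuffSaturated ι S cS →
      Aleph0CatTheory ι (CLOTheory ι (TypeSet ι S cS Φ) (subColor cS (TypeSet ι S cS Φ)))) :
    ∃ 𝓛 : Set (CLOLang ι).Theory, 𝓛.Finite ∧ (∀ T ∈ 𝓛, Aleph0CatTheory ι T) ∧
      ∀ (A : Type) [LinearOrder A] [Colored ι A], (A ≅[CLOLang ι] M₀) →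
        intervalTheories ι (TypeSet ι A Colored.color Φ) ⊆ 𝓛 := by
  have := nonempty_of_isConvexType hΦ
  obtain ⟨S, _, _, hSM, hS⟩ := exists_isSaturatedHomogeneous_colored ι M₀
  have := (hS.typeSet_nonempty hSM hΦ.2.1).to_subtype
  have hfin : FinTypes (CLOLang ι) (TypeSet ι S Colored.color Φ) :=
    finTypes_of_aleph0CatTheory (hcat S Colored.color hSM hS.suffSaturated)
  exact ⟨_, finite_intervalTheories hfin, aleph0CatTheory_of_mem_intervalTheories hfin,
    fun A _ _ hA => hS.intervalTheories_typeSet_subset hSM hΦ hA⟩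

end LocallySimple

end CLO

theorem stmt12_general {ι : Type} [Countable ι] {M₀ : Type} [LinearOrder M₀] (c₀ : ι → Set M₀)
    {Φ : Set ((CLOLang ι).Formula Unit)} (hΦ : IsConvexType ι M₀ c₀ Φ)
    (hcat : ∀ (S : Type) [LinearOrder S], ∀ cS : ι → Set S, CLOEquiv ι S cS M₀ c₀ →
      SuffSaturated ι S cS →
      Aleph0CatTheory ι (CLOTheory ι (TypeSet ι S cS Φ) (subColor cS (TypeSet ι S cS Φ)))) :
    (TheoriesAt ι M₀ c₀ Φ).Finite ∧
      (∀ T ∈ TheoriesAt ι M₀ c₀ Φ, Aleph0CatTheory ι T) ∧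
      ((∃ T, TheoriesAt ι M₀ c₀ Φ = {T}) ↔ IsolatedCT ι M₀ c₀ Φ) := by
  let : CLO.Colored ι M₀ := ⟨c₀⟩
  obtain ⟨𝓛, h𝓛, h𝓛cat, hsub⟩ := CLO.exists_finite_intervalTheories_typeSet_subset hΦ hcat
  refine ⟨(CLO.finite_setOf_completeTheory h𝓛 h𝓛cat).subset ?_, ?_,
    CLO.exists_theoriesAt_eq_singleton_iff hΦ⟩
  all_goals
    rintro _ ⟨A, _, cA, hA, rfl⟩
    let : CLO.Colored ι A := ⟨cA⟩
  · exact ⟨_, _, _, hsub A hA, rfl⟩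
  · exact CLO.aleph0CatTheory_of_intervalTheories_subset h𝓛 h𝓛cat (hsub A hA)

theorem stmt12 {ι : Type} [Countable ι] {M₀ : Type} [LinearOrder M₀] (c₀ : ι → Set M₀)
    (hLS : LocallySimple ι M₀ c₀)
    (Φ : Set ((CLOLang ι).Formula Unit)) (hΦ : IsConvexType ι M₀ c₀ Φ) :
    (TheoriesAt ι M₀ c₀ Φ).Finite ∧
      (∀ T ∈ TheoriesAt ι M₀ c₀ Φ, Aleph0CatTheory ι T) ∧
      ((∃ T, TheoriesAt ι M₀ c₀ Φ = {T}) ↔ IsolatedCT ι M₀ c₀ Φ) :=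
  stmt12_general c₀ hΦ fun S _ cS hS hsat => hLS S cS hS hsat Φ hΦ
end

section
/- Let T be a complete CLO theory, let A and B be models of T with A an elementary substructure of B, and suppose there is a set K ⊆ IT(T) such that the set C = B ∖ ⋃_{Φ∈K} Φ(B) satisfies A ⊆ C ⊆ B. Then C, with its induced L_κ-structure, is an elementary substructure of B. -/
open FirstOrder Language Set

/-!
Let `I ⊆ B` be a `∅`-definable convex set. A point outside `I` lies on the same side of all points
of `I`, so an atomic formula with an argument outside `I` does not depend on the arguments inside
`I`. By induction, a formula with parameters outside `I` has only finitely many traces on `I` as the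
parameters vary, all of them `∅`-definable: a quantifier over `I` is harmless, and one over the
complement of `I` amounts to a finite intersection of traces.

Now run the Tarski–Vaught test on `C`. A witness `b ∉ C` realizes some `Φ ∈ K`, which no parameter
in `C` realizes, so a finite conjunction `I` of formulas in `Φ` contains `b` and none of the
parameters. The witnesses in `I` form a nonempty `∅`-definable set, which therefore meets `A ⊆ C`.
-/

section Traces

variable {L : Language} {M : Type*} [L.Structure M] {A I : Set M} {α β : Type*}

/-- The trace on the tuples from `I` of the relation `P`, with `y` substituted for its second
block of variables. -/
def trace (I : Set M) (P : (α → M) → (β → M) → Prop) (y : β → M) : Set (α → M) :=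
  (univ.pi fun _ => I) ∩ {x | P x y}

variable (L A I) in
/-- `P` has, as its second block of variables ranges over tuples from outside `I`, only finitely
many traces on `I`, and they are all definable over `A`. Asking for finitely many traces, rather
than only for definable ones, is what makes the notion pass through a quantifier over `Iᶜ`. -/
def HasFiniteTraces (P : (α → M) → (β → M) → Prop) : Prop :=
  ∃ F : Set (Set (α → M)), F.Finite ∧ (∀ T ∈ F, A.Definable L T) ∧
    ∀ y : β → M, (∀ j, y j ∉ I) → trace I P y ∈ F

variable (L) in
/-- The notion of interval of a relational structure (Fraïssé), also known as autonomous set or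
module: a relation which involves a point outside `I` does not distinguish the points of `I`. -/
def IsRelInterval (I : Set M) : Prop :=
  ∀ ⦃n : ℕ⦄ (R : L.Relations n) (v w : Fin n → M),
    (∀ i, v i = w i ∨ v i ∈ I ∧ w i ∈ I) → (∃ i, v i ∉ I) →
      Structure.RelMap R v → Structure.RelMap R w

theorem IsRelInterval.iInter {κ : Sort*} {J : κ → Set M} (hJ : ∀ k, IsRelInterval L (J k)) :
    IsRelInterval L (⋂ k, J k) := by
  rintro n R v w hvw ⟨i, hi⟩
  obtain ⟨k, hk⟩ : ∃ k, v i ∉ J k := by simpa only [mem_iInter, not_forall] using hi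
  exact hJ k R v w
    (fun i => (hvw i).imp_right (And.imp (mem_iInter.1 · k) (mem_iInter.1 · k))) ⟨i, hk⟩

theorem definable₁_iInter {κ : Type*} [Finite κ] {J : κ → Set M}
    (hJ : ∀ k, A.Definable₁ L (J k)) : A.Definable₁ L (⋂ k, J k) := by
  simpa only [Definable₁, mem_iInter, ofPred_forall] using definable_iInter_of_finite hJ

theorem definable_pi_const [Finite α] (hI : A.Definable₁ L I) :
    A.Definable L (univ.pi fun _ : α => I) := by
  have hpi : (univ.pi fun _ : α => I) = ⋂ i : α, {x | x i ∈ I} := by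
    ext x
    simp only [mem_univ_pi, mem_iInter, mem_ofPred_eq]
  rw [hpi]
  exact definable_iInter_of_finite fun i => hI.preimage_comp fun _ => i

theorem definable_forall_mem (hI : A.Definable₁ L I) {T : Set (α ⊕ Unit → M)}
    (hT : A.Definable L T) :
    A.Definable L {x : α → M | ∀ z ∈ I, Sum.elim x (fun _ => z) ∈ T} := by
  have hIT : A.Definable L ({v : α ⊕ Unit → M | v (.inr ()) ∈ I}ᶜ ∪ T) :=
    .union (.compl (hI.preimage_comp fun _ => Sum.inr ())) hT
  refine (congrArg _ ?_).mp hIT.forall_of_finite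
  ext x
  exact ⟨fun h z hz => (h fun _ => z).resolve_left (not_not_intro hz),
    fun h u => or_iff_not_imp_left.2 fun hu => h (u ()) (not_not.1 hu)⟩

theorem definable_eq (i j : α) : A.Definable L {x : α → M | x i = x j} :=
  (empty_definable_iff.2 ⟨(Term.var i).equal (Term.var j), by ext; simp⟩).mono (empty_subset A)

theorem definable_relMap {n : ℕ} (R : L.Relations n) (τ : Fin n → α) :
    A.Definable L {x : α → M | Structure.RelMap R (x ∘ τ)} :=
  (empty_definable_iff.2 ⟨R.formula fun i => Term.var (τ i), by
    ext; simp [Formula.realize_rel, Function.comp_def]⟩).mono (empty_subset A)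

theorem HasFiniteTraces.congr {P Q : (α → M) → (β → M) → Prop} (hP : HasFiniteTraces L A I P)
    (h : ∀ x y, P x y ↔ Q x y) : HasFiniteTraces L A I Q := by
  obtain rfl : P = Q := funext₂ fun x y => propext (h x y)
  exact hP

theorem hasFiniteTraces_of_definable [Finite α] (hI : A.Definable₁ L I) {p : (α → M) → Prop}
    (hp : A.Definable L {x | p x}) : HasFiniteTraces L A I fun x (_ : β → M) => p x :=
  ⟨{(univ.pi fun _ => I) ∩ {x | p x}}, finite_singleton _,
    forall_eq.2 ((definable_pi_const hI).inter hp), fun _ _ => rfl⟩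

theorem hasFiniteTraces_of_imp [Finite α] (hI : A.Definable₁ L I)
    {P : (α → M) → (β → M) → Prop}
    (hP : ∀ y : β → M, (∀ j, y j ∉ I) → ∀ x x' : α → M, (∀ i, x i ∈ I) → (∀ i, x' i ∈ I) →
      P x y → P x' y) : HasFiniteTraces L A I P := by
  refine ⟨{∅, univ.pi fun _ => I}, toFinite _, ?_, fun y hy => ?_⟩
  · rintro T (rfl | rfl)
    exacts [definable_empty, definable_pi_const hI]
  · rcases (trace I P y).eq_empty_or_nonempty with h | ⟨x, hx, hxy⟩
    · exact .inl h
    · exact .inr <| inter_eq_left.2 fun x' hx' =>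
        hP y hy x x' (mem_univ_pi.1 hx) (mem_univ_pi.1 hx') hxy

theorem hasFiniteTraces_eq [Finite α] (hI : A.Definable₁ L I) (i j : α ⊕ β) :
    HasFiniteTraces L A I fun x y => Sum.elim x y i = Sum.elim x y j := by
  rcases i with i | i <;> rcases j with j | j
  · exact hasFiniteTraces_of_definable hI (definable_eq i j)
  · exact hasFiniteTraces_of_imp hI fun y hy x _ hx _ h =>
      absurd (show x i = y j from h) (ne_of_mem_of_not_mem (hx i) (hy j))
  · exact hasFiniteTraces_of_imp hI fun y hy x _ hx _ h =>
      absurd (show x j = y i from h.symm) (ne_of_mem_of_not_mem (hx j) (hy i))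
  · exact hasFiniteTraces_of_imp hI fun _ _ _ _ _ _ h => h

theorem IsRelInterval.hasFiniteTraces_relMap [Finite α] (hI : IsRelInterval L I)
    (hd : A.Definable₁ L I) {n : ℕ} (R : L.Relations n) (σ : Fin n → α ⊕ β) :
    HasFiniteTraces L A I fun x y => Structure.RelMap R (Sum.elim x y ∘ σ) := by
  by_cases hσ : ∃ i j, σ i = .inr j
  · obtain ⟨i, j, hij⟩ := hσ
    refine hasFiniteTraces_of_imp hd fun y hy x x' hx hx' =>
      hI R _ _ (fun k => ?_) ⟨i, by simpa only [Function.comp_apply, hij, Sum.elim_inr] using hy j⟩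
    rcases h : σ k with a | b
    · exact .inr (by simpa only [Function.comp_apply, h] using ⟨hx a, hx' a⟩)
    · exact .inl (by simp only [Function.comp_apply, h, Sum.elim_inr])
  · have hinl : ∀ i, ∃ a, .inl a = σ i := fun i => by
      rcases h : σ i with a | b
      exacts [⟨a, rfl⟩, (hσ ⟨i, b, h⟩).elim]
    choose τ hτ using hinl
    obtain rfl : Sum.inl ∘ τ = σ := funext hτ
    exact hasFiniteTraces_of_definable hd (definable_relMap R τ)

namespace HasFiniteTraces

theorem map₂ {P Q S : (α → M) → (β → M) → Prop} (hP : HasFiniteTraces L A I P)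
    (hQ : HasFiniteTraces L A I Q) (op : Set (α → M) → Set (α → M) → Set (α → M))
    (hop : ∀ T U, A.Definable L T → A.Definable L U → A.Definable L (op T U))
    (hS : ∀ y, trace I S y = op (trace I P y) (trace I Q y)) : HasFiniteTraces L A I S := by
  obtain ⟨F, hF, hdF, htF⟩ := hP
  obtain ⟨G, hG, hdG, htG⟩ := hQ
  refine ⟨image2 op F G, hF.image2 op hG, ?_, fun y hy => ?_⟩
  · rintro _ ⟨T, hT, U, hU, rfl⟩
    exact hop T U (hdF T hT) (hdG U hU)
  · exact hS y ▸ mem_image2_of_mem (htF y hy) (htG y hy)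

theorem and {P Q : (α → M) → (β → M) → Prop} (hP : HasFiniteTraces L A I P)
    (hQ : HasFiniteTraces L A I Q) : HasFiniteTraces L A I fun x y => P x y ∧ Q x y :=
  hP.map₂ hQ (· ∩ ·) (fun _ _ => Definable.inter) fun _ => inter_inter_distrib_left ..

theorem imp [Finite α] {P Q : (α → M) → (β → M) → Prop} (hI : A.Definable₁ L I)
    (hP : HasFiniteTraces L A I P) (hQ : HasFiniteTraces L A I Q) :
    HasFiniteTraces L A I fun x y => P x y → Q x y := by
  refine hP.map₂ hQ (fun T U => (univ.pi fun _ => I) ∩ (Tᶜ ∪ U))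
    (fun T U hT hU => (definable_pi_const hI).inter (hT.compl.union hU)) fun y => ?_
  ext x
  simp only [trace, mem_inter_iff, mem_union, mem_compl_iff, mem_ofPred_eq]
  tauto

theorem forall_mem [Finite α] {P : (α ⊕ Unit → M) → (β → M) → Prop} (hI : A.Definable₁ L I)
    (hP : HasFiniteTraces L A I P) :
    HasFiniteTraces L A I fun x y => ∀ z ∈ I, P (Sum.elim x fun _ => z) y := by
  obtain ⟨F, hF, hd, ht⟩ := hP
  refine ⟨(fun T => (univ.pi fun _ => I) ∩ {x | ∀ z ∈ I, Sum.elim x (fun _ => z) ∈ T}) '' F,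
    hF.image _, ?_, fun y hy => ⟨_, ht y hy, ?_⟩⟩
  · rintro _ ⟨T, hT, rfl⟩
    exact (definable_pi_const hI).inter (definable_forall_mem hI (hd T hT))
  · ext x
    refine and_congr_right fun hx => forall₂_congr fun z hz => and_iff_right ?_
    exact fun i _ => i.rec (fun i => hx i trivial) fun _ => hz

theorem forall_notMem [Finite α] {P : (α → M) → (β ⊕ Unit → M) → Prop} (hI : A.Definable₁ L I)
    (hP : HasFiniteTraces L A I P) :
    HasFiniteTraces L A I fun x y => ∀ z ∉ I, P x (Sum.elim y fun _ => z) := by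
  obtain ⟨F, hF, hd, ht⟩ := hP
  refine ⟨(fun S => (univ.pi fun _ => I) ∩ ⋂₀ S) '' F.powerset, hF.powerset.image _, ?_,
    fun y hy => ⟨(fun z => trace I P (Sum.elim y fun _ => z)) '' Iᶜ, ?_, ?_⟩⟩
  · rintro _ ⟨S, hSF, rfl⟩
    have : Finite S := hF.subset hSF
    have hS : A.Definable L (⋂₀ S) :=
      sInter_eq_iInter ▸ definable_iInter_of_finite fun T : S => hd T (hSF T.2)
    exact (definable_pi_const hI).inter hS
  · rintro _ ⟨z, hz, rfl⟩
    exact ht _ (Sum.forall.2 ⟨hy, fun _ => hz⟩)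
  · ext x
    simp only [trace, sInter_image, mem_inter_iff, mem_iInter, mem_compl_iff, mem_ofPred_eq]
    exact and_congr_right fun hx => forall₂_congr fun z _ => and_iff_right hx

end HasFiniteTraces

theorem exists_eq_var [L.IsRelational] (t : L.Term α) : ∃ a, t = Term.var a := by
  rcases t with a | ⟨f, _⟩
  exacts [⟨a, rfl⟩, isEmptyElim f]

theorem IsRelInterval.hasFiniteTraces_realize [L.IsRelational] (hI : IsRelInterval L I)
    (hd : A.Definable₁ L I) {n : ℕ} (φ : L.BoundedFormula Empty n) [Finite α]
    (σ : Fin n → α ⊕ β) :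
    HasFiniteTraces L A I fun x y => φ.Realize default (Sum.elim x y ∘ σ) := by
  induction φ generalizing α β with
  | falsum => exact hasFiniteTraces_of_imp hd fun _ _ _ _ _ _ h => h
  | equal t₁ t₂ =>
    obtain ⟨⟨⟨⟩⟩ | i, rfl⟩ := exists_eq_var t₁
    obtain ⟨⟨⟨⟩⟩ | j, rfl⟩ := exists_eq_var t₂
    exact hasFiniteTraces_eq hd (σ i) (σ j)
  | rel R ts =>
    have hts : ∀ i, ∃ j, ts i = Term.var (.inr j) := fun i => by
      obtain ⟨⟨⟨⟩⟩ | j, hj⟩ := exists_eq_var (ts i)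
      exact ⟨j, hj⟩
    choose τ hτ using hts
    obtain rfl : ts = fun i => Term.var (.inr (τ i)) := funext hτ
    exact hI.hasFiniteTraces_relMap hd R (σ ∘ τ)
  | imp φ₁ φ₂ ih₁ ih₂ => exact (ih₁ σ).imp hd (ih₂ σ)
  | @all n φ ih =>
    let σIn : Fin (n + 1) → (α ⊕ Unit) ⊕ β := Fin.snoc (Sum.map .inl id ∘ σ) (.inl (.inr ()))
    let σOut : Fin (n + 1) → α ⊕ (β ⊕ Unit) := Fin.snoc (Sum.map id .inl ∘ σ) (.inr (.inr ()))
    refine (((ih σIn).forall_mem hd).and ((ih σOut).forall_notMem hd)).congr fun x y => ?_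
    have hIn (z : M) : Sum.elim (Sum.elim x fun _ => z) y ∘ σIn =
        Fin.snoc (Sum.elim x y ∘ σ) z := by
      simp [σIn, Fin.comp_snoc, ← Function.comp_assoc, Sum.elim_comp_map]
    have hOut (z : M) : Sum.elim x (Sum.elim y fun _ => z) ∘ σOut =
        Fin.snoc (Sum.elim x y ∘ σ) z := by
      simp [σOut, Fin.comp_snoc, ← Function.comp_assoc, Sum.elim_comp_map]
    simp only [hIn, hOut, BoundedFormula.realize_all]
    exact ⟨fun h z => (em (z ∈ I)).elim (h.1 z) (h.2 z), fun h => ⟨fun z _ => h z, fun z _ => h z⟩⟩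

theorem IsRelInterval.definable₁_realize_snoc [L.IsRelational] (hI : IsRelInterval L I)
    (hd : A.Definable₁ L I) {n : ℕ} (φ : L.BoundedFormula Empty (n + 1)) {y : Fin n → M}
    (hy : ∀ i, y i ∉ I) :
    A.Definable₁ L {z | z ∈ I ∧ φ.Realize default (Fin.snoc y z : Fin (n + 1) → M)} := by
  obtain ⟨F, -, hF, hyF⟩ :=
    hI.hasFiniteTraces_realize hd φ (Fin.snoc Sum.inr (.inl 0) : Fin (n + 1) → Fin 1 ⊕ Fin n)
  have hdT := hF _ (hyF y hy)
  rw [Definable₁]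
  convert! hdT using 1
  ext x
  simp [trace, Fin.comp_snoc, Fin.forall_fin_one]

theorem realize_comp_iff_of_separated {N : Type*} [L.IsRelational] [L.Structure N]
    (f : N ↪[L] M)
    (hmeet : ∀ D : Set M, A.Definable₁ L D → D.Nonempty → (D ∩ range f).Nonempty)
    (hsep : ∀ b ∉ range f, ∀ c, ∃ J : Set M, A.Definable₁ L J ∧ IsRelInterval L J ∧
      b ∈ J ∧ f c ∉ J) {k : ℕ} (φ : L.Formula (Fin k)) (v : Fin k → N) :
    φ.Realize (f ∘ v) ↔ φ.Realize v := by
  refine f.isElementary_of_exists (fun n φ y b hb => ?_) φ v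
  by_cases hbf : b ∈ range f
  · obtain ⟨c, rfl⟩ := hbf
    exact ⟨c, hb⟩
  choose J hdJ hJ hbJ hyJ using fun i => hsep b hbf (y i)
  have hy : ∀ i, (f ∘ y) i ∉ ⋂ i, J i := fun i hi => hyJ i (mem_iInter.1 hi i)
  obtain ⟨_, ⟨-, hc⟩, c, rfl⟩ := hmeet _
    ((IsRelInterval.iInter hJ).definable₁_realize_snoc (definable₁_iInter hdJ) φ hy)
    ⟨b, mem_iInter.2 hbJ, hb⟩
  exact ⟨c, hc⟩

end Traces

section ColoredLinearOrder

variable {ι B : Type} [LinearOrder B] {cB : ι → Set B}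

instance : (CLOLang ι).IsRelational := fun _ => inferInstanceAs (IsEmpty Empty)

theorem isRelInterval_of_ordConnected {I : Set B} (hI : I.OrdConnected) :
    letI := CLOStr ι B cB
    IsRelInterval (CLOLang ι) I := by
  rintro n R v w hvw ⟨i, hi⟩ hv
  rcases R with _ | k
  · have hout : ¬(v 0 ∈ I ∧ v 1 ∈ I) := fun h => hi (Fin.forall_fin_two (p := (v · ∈ I)) |>.2 h i)
    have hlt : v 0 < v 1 := hv
    suffices w 0 < w 1 from this
    by_contra! hle
    rcases hvw 0 with h₀ | ⟨hv₀, hw₀⟩ <;> rcases hvw 1 with h₁ | ⟨hv₁, hw₁⟩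
    · exact hle.not_gt (h₀ ▸ h₁ ▸ hlt)
    · exact hout ⟨hI.out hw₁ hv₁ ⟨h₀ ▸ hle, hlt.le⟩, hv₁⟩
    · exact hout ⟨hv₀, hI.out hv₀ hw₀ ⟨hlt.le, h₁ ▸ hle⟩⟩
    · exact hout ⟨hv₀, hv₁⟩
  · obtain rfl := Subsingleton.elim i 0
    have h₀ : v 0 = w 0 := (hvw 0).resolve_right fun h => hi h.1
    exact (congrArg (· ∈ cB k) h₀).mp hv

theorem sat_relabel {γ δ : Type} {φ : (CLOLang ι).Formula γ} {g : γ → δ} {v : δ → B} :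
    Sat B cB (φ.relabel g) v ↔ Sat B cB φ (v ∘ g) := by
  let _ := CLOStr ι B cB
  exact Formula.realize_relabel

theorem definable₁_iff_exists_fmlSet_eq {D : Set B} :
    letI := CLOStr ι B cB
    (∅ : Set B).Definable₁ (CLOLang ι) D ↔ ∃ φ, FmlSet ι B cB φ = D := by
  let _ := CLOStr ι B cB
  rw [Definable₁, empty_definable_iff]
  constructor
  · rintro ⟨φ, hφ⟩
    refine ⟨φ.relabel fun _ => (), ext fun b => ?_⟩
    exact Formula.realize_relabel.trans (Set.ext_iff.1 hφ fun _ => b).symm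
  · rintro ⟨φ, rfl⟩
    refine ⟨φ.relabel fun _ => 0, ext fun x => ?_⟩
    exact Formula.realize_relabel.symm

theorem IsElemMap.fmlSet_inter_range_nonempty {M : Type} [LinearOrder M] {cM : ι → Set M}
    {f : M → B} (hf : IsElemMap ι cM cB f) {φ : (CLOLang ι).Formula Unit}
    (hφ : (FmlSet ι B cB φ).Nonempty) : (FmlSet ι B cB φ ∩ range f).Nonempty := by
  let _ := CLOStr ι B cB
  let _ := CLOStr ι M cM
  obtain ⟨b, hb⟩ := hφ
  have hex : Sat M cM (Formula.iExs Unit (φ.relabel (Sum.inr : Unit → Fin 0 ⊕ Unit))) ![] :=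
    (hf 0 _ _).2 <| Formula.realize_iExs.2 ⟨fun _ => b, sat_relabel.2 hb⟩
  obtain ⟨a, hra⟩ := Formula.realize_iExs.1 hex
  have ha : Sat M cM φ a := (sat_relabel (g := Sum.inr) (v := Sum.elim ![] a)).1 hra
  have hfa : Sat B cB φ (f ∘ a) := (sat_relabel (v := f ∘ fun _ : Fin 1 => a ())).1 <|
    (hf 1 (φ.relabel fun _ => 0) fun _ => a ()).1 (sat_relabel.2 ha)
  exact ⟨f (a ()), hfa, mem_range_self _⟩

theorem isElemSubset_of_separated {C : Set B}
    (hmeet : ∀ φ, (FmlSet ι B cB φ).Nonempty → (FmlSet ι B cB φ ∩ C).Nonempty)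
    (hsep : ∀ b ∉ C, ∀ c ∈ C, ∃ ψ, (FmlSet ι B cB ψ).OrdConnected ∧
      b ∈ FmlSet ι B cB ψ ∧ c ∉ FmlSet ι B cB ψ) : IsElemSubset ι B cB C := by
  let _ := CLOStr ι B cB
  let _ := CLOStr ι C (subColor cB C)
  let f : C ↪[CLOLang ι] B :=
    { toFun := Subtype.val
      inj' := Subtype.val_injective
      map_fun' := fun g => Empty.elim g
      map_rel' := fun R _ => by rcases R with _ | k <;> exact Iff.rfl }
  have hrange : range f = C := Subtype.range_coe
  refine fun k φ v => (realize_comp_iff_of_separated f (A := ∅) ?_ ?_ φ v).symm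
  · intro D hD
    obtain ⟨φ, rfl⟩ := definable₁_iff_exists_fmlSet_eq.1 hD
    exact hrange.symm ▸ hmeet φ
  · intro b hb c
    obtain ⟨ψ, hψ, hbψ, hcψ⟩ := hsep b (hrange ▸ hb) c c.2
    exact ⟨_, definable₁_iff_exists_fmlSet_eq.2 ⟨ψ, rfl⟩, isRelInterval_of_ordConnected hψ,
      hbψ, hcψ⟩

theorem stmt14_general {K : Set (Set ((CLOLang ι).Formula Unit))}
    (hK : ∀ Φ ∈ K, ∀ φ ∈ Φ, (FmlSet ι B cB φ).OrdConnected)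
    (hmeet : ∀ φ, (FmlSet ι B cB φ).Nonempty →
      (FmlSet ι B cB φ ∩ {x | ∀ Φ ∈ K, x ∉ TypeSet ι B cB Φ}).Nonempty) :
    IsElemSubset ι B cB {x | ∀ Φ ∈ K, x ∉ TypeSet ι B cB Φ} := by
  refine isElemSubset_of_separated hmeet fun b hb c hc => ?_
  obtain ⟨Φ, hΦ, hbΦ⟩ : ∃ Φ ∈ K, b ∈ TypeSet ι B cB Φ := by
    simpa only [mem_ofPred_eq, not_forall, not_not, exists_prop] using hb
  obtain ⟨φ, hφ, hcφ⟩ : ∃ φ ∈ Φ, c ∉ FmlSet ι B cB φ := by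
    simpa only [TypeSet, FmlSet, mem_ofPred_eq, not_forall, exists_prop] using hc Φ hΦ
  exact ⟨φ, hK Φ hΦ φ hφ, hbΦ φ hφ, hcφ⟩

end ColoredLinearOrder

theorem stmt14 {ι : Type} [Countable ι] {M₀ : Type} [LinearOrder M₀] (c₀ : ι → Set M₀)
    {B : Type} [LinearOrder B] (cB : ι → Set B) (hB : CLOEquiv ι B cB M₀ c₀)
    (A : Set B) (hA : IsElemSubset ι B cB A)
    (K : Set (Set ((CLOLang ι).Formula Unit))) (hK : ∀ Φ ∈ K, IsConvexType ι M₀ c₀ Φ)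
    (hAC : A ⊆ {x : B | ∀ Φ ∈ K, x ∉ TypeSet ι B cB Φ}) :
    IsElemSubset ι B cB {x : B | ∀ Φ ∈ K, x ∉ TypeSet ι B cB Φ} :=
  stmt14_general (fun Φ hΦ φ hφ => (hK Φ hΦ).1 φ hφ B _ cB hB) fun _ hφ =>
    (hA.fmlSet_inter_range_nonempty hφ).mono
      (inter_subset_inter_right _ (Subtype.range_coe.trans_subset hAC))
end
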